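/- Let f: K → ℝ be a function on the convex bodies of ℝ^n that is continuous with respect to the Hausdorff metric and invariant under all isometries of ℝ^n, and suppose f is a valuation: f(∅)=0 and f(K ∪ L) = f(K) + f(L) − f(K ∩ L) whenever K, L and K ∪ L are convex bodies. If moreover f is simple (vanishes on convex bodies of dimension < n), then f is a constant multiple of the n-dimensional Lebesgue volume. -/

import Mathlib

open MeasureTheory Metric Set Filter

/-- A convex body of `ℝ^n`: a nonempty compact convex set. -/
def IsConvexBody {n : ℕ} (K : Set (EuclideanSpace ℝ (Fin n))) : Prop :=
  K.Nonempty ∧ IsCompact K ∧ Convex ℝ K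

/-!
After subtracting a multiple of the volume, one has to show that a simple valuation `f` vanishing on
the unit cube is zero, which is done by induction on the dimension. If `F` and `G` lie in orthogonal
proper subspaces, then `F ↦ f (G + F)` is a simple valuation of the smaller space, and applying the
induction hypothesis twice gives `f (F + G) = 0`. Hyperplanes cut the double of an orthoscheme into
translates of itself, taken twice, and orthogonal sums of smaller orthoschemes, so `f` doubles with
every orthoscheme. As every convex body is a limit of polytopes, and polytopes are dissected, with
signs, into orthoschemes, `f (2 • K) = 2 * f K` for all `K`. The same dissection applied to the
defect `F ↦ f (K + F) - f K - f F`, by induction on the subspace containing `F`, shows that the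
defect doubles with `F`; comparing this with its homogeneity under doubling both `K` and `F`, the
defect is unchanged when `K` shrinks to a point, where it is zero. Hence `f` is Minkowski additive,
so it is unchanged when a body is replaced by the mean of its images under reflections, and such
means approach a ball. So every value of `f` is the value at a ball; these are proportional to the
radius, and the cube makes them all zero.
-/

namespace Hadwiger

open scoped Pointwise RealInnerProductSpace Topology

section Bodies

variable {E F : Type*} [NormedAddCommGroup E] [NormedSpace ℝ E]
  [NormedAddCommGroup F] [NormedSpace ℝ F] {K L G : Set E}

/-- Convex bodies of an arbitrary real normed space, so that the bodies of a subspace `U`,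
regarded as a space of its own, are covered as well. -/
structure IsBody (K : Set E) : Prop where
  nonempty : K.Nonempty
  isCompact : IsCompact K
  convex : Convex ℝ K

theorem isConvexBody_iff_isBody {n : ℕ} {K : Set (EuclideanSpace ℝ (Fin n))} :
    IsConvexBody K ↔ IsBody K :=
  ⟨fun h => ⟨h.1, h.2.1, h.2.2⟩, fun h => ⟨h.nonempty, h.isCompact, h.convex⟩⟩

theorem isBody_singleton (x : E) : IsBody ({x} : Set E) :=
  ⟨singleton_nonempty x, isCompact_singleton, convex_singleton x⟩

theorem isBody_closedBall [ProperSpace E] (x : E) {r : ℝ} (hr : 0 ≤ r) : IsBody (closedBall x r) :=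
  ⟨nonempty_closedBall.2 hr, isCompact_closedBall x r, convex_closedBall x r⟩

theorem IsBody.add (hK : IsBody K) (hL : IsBody L) : IsBody (K + L) :=
  ⟨hK.nonempty.add hL.nonempty, hK.isCompact.add hL.isCompact, hK.convex.add hL.convex⟩

theorem IsBody.smul (hK : IsBody K) (c : ℝ) : IsBody (c • K) :=
  ⟨hK.nonempty.smul_set, hK.isCompact.smul c, hK.convex.smul c⟩

theorem IsBody.image (hK : IsBody K) (g : E →L[ℝ] F) : IsBody (g '' K) :=
  ⟨hK.nonempty.image g, hK.isCompact.image g.continuous, hK.convex.linear_image g.toLinearMap⟩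

theorem IsBody.image_isometryEquiv (hK : IsBody K) (g : E ≃ᵢ F) : IsBody (g '' K) := by
  refine ⟨hK.nonempty.image g, hK.isCompact.image g.continuous, ?_⟩
  rw [← g.coe_toRealAffineIsometryEquiv]
  exact hK.convex.affine_image g.toRealAffineIsometryEquiv.toAffineEquiv.toAffineMap

theorem isBody_sum {ι : Type*} {s : Finset ι} {K : ι → Set E} (hK : ∀ i ∈ s, IsBody (K i)) :
    IsBody (∑ i ∈ s, K i) :=
  Finset.sum_induction _ IsBody (fun _ _ => IsBody.add) (isBody_singleton 0) hK

theorem IsBody.preimage_subtypeVal {U : Submodule ℝ E} (hU : IsClosed (U : Set E)) (hK : IsBody K)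
    (hKU : K ⊆ U) : IsBody ((↑) ⁻¹' K : Set U) := by
  refine ⟨?_, hU.isClosedEmbedding_subtypeVal.isCompact_preimage hK.isCompact,
    hK.convex.linear_preimage U.subtype⟩
  obtain ⟨x, hx⟩ := hK.nonempty
  exact ⟨⟨x, hKU hx⟩, hx⟩

theorem nonempty_segment_inter_of_convex_union {a b : E} (hK : IsClosed K) (hL : IsClosed L)
    (hKL : Convex ℝ (K ∪ L)) (ha : a ∈ K) (hb : b ∈ L) : (segment ℝ a b ∩ (K ∩ L)).Nonempty :=
  isPreconnected_closed_iff.1 (convex_segment a b).isPreconnected K L hK hL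
    (hKL.segment_subset (.inl ha) (.inr hb)) ⟨a, left_mem_segment ℝ a b, ha⟩
    ⟨b, right_mem_segment ℝ a b, hb⟩

theorem IsBody.inter_of_convex_union (hK : IsBody K) (hL : IsBody L) (hKL : Convex ℝ (K ∪ L)) :
    IsBody (K ∩ L) := by
  obtain ⟨a, ha⟩ := hK.nonempty
  obtain ⟨b, hb⟩ := hL.nonempty
  exact ⟨(nonempty_segment_inter_of_convex_union hK.isCompact.isClosed hL.isCompact.isClosed hKL
    ha hb).mono inter_subset_right, hK.isCompact.inter hL.isCompact, hK.convex.inter hL.convex⟩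

theorem add_inter_add_of_convex_union (hG : Convex ℝ G) (hK : IsClosed K) (hL : IsClosed L)
    (hKL : Convex ℝ (K ∪ L)) : (G + K) ∩ (G + L) = G + K ∩ L := by
  refine Subset.antisymm ?_ (subset_inter (add_subset_add_left inter_subset_left)
    (add_subset_add_left inter_subset_right))
  rintro _ ⟨⟨g, hg, a, ha, rfl⟩, g', hg', b, hb, heq⟩
  obtain ⟨_, ⟨s, t, hs, ht, hst, rfl⟩, hz⟩ :=
    nonempty_segment_inter_of_convex_union hK hL hKL ha hb
  refine ⟨s • g + t • g', hG hg hg' hs ht hst, _, hz, ?_⟩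
  calc s • g + t • g' + (s • a + t • b) = s • (g + a) + t • (g' + b) := by module
    _ = (s + t) • (g + a) := by rw [show g' + b = g + a from heq, add_smul]
    _ = g + a := by rw [hst, one_smul]

end Bodies

section HausdorffDistance

variable {E : Type*} [NormedAddCommGroup E] [NormedSpace ℝ E] {K L : Set E}

theorem IsBody.exists_dist_lt (hK : IsBody K) (hL : IsBody L) {x : E} {r : ℝ} (hx : x ∈ K)
    (hr : hausdorffDist K L < r) : ∃ y ∈ L, dist x y < r :=
  exists_dist_lt_of_hausdorffDist_lt hx hr (hausdorffEDist_ne_top_of_nonempty_of_bounded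
    hK.nonempty hL.nonempty hK.isCompact.isBounded hL.isCompact.isBounded)

theorem hausdorffDist_add_left_le {G : Set E} (hK : IsBody K) (hL : IsBody L) :
    hausdorffDist (G + K) (G + L) ≤ hausdorffDist K L := by
  have close : ∀ {A B : Set E}, IsBody A → IsBody B → ∀ {r : ℝ}, hausdorffDist A B < r →
      ∀ x ∈ G + A, ∃ y ∈ G + B, dist x y ≤ r := by
    rintro A B hA hB r hr _ ⟨g, hg, x, hx, rfl⟩
    obtain ⟨y, hy, hxy⟩ := hA.exists_dist_lt hB hx hr
    exact ⟨g + y, add_mem_add hg hy, (dist_add_left g x y).trans_le hxy.le⟩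
  refine le_of_forall_gt_imp_ge_of_dense fun r hr => ?_
  exact hausdorffDist_le_of_mem_dist (hausdorffDist_nonneg.trans hr.le) (close hK hL hr)
    (close hL hK (hausdorffDist_comm.trans_lt hr))

theorem tendsto_hausdorffDist_add_left {G : Set E} {K : ℕ → Set E} (hK : ∀ m, IsBody (K m))
    (hL : IsBody L) (h : Tendsto (fun m => hausdorffDist (K m) L) atTop (𝓝 0)) :
    Tendsto (fun m => hausdorffDist (G + K m) (G + L)) atTop (𝓝 0) :=
  squeeze_zero (fun _ => hausdorffDist_nonneg) (fun m => hausdorffDist_add_left_le (hK m) hL) h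

theorem tendsto_hausdorffDist_smul (hK : Bornology.IsBounded K) {c : ℕ → ℝ} {a : ℝ}
    (hc : Tendsto c atTop (𝓝 a)) :
    Tendsto (fun m => hausdorffDist (c m • K) (a • K)) atTop (𝓝 0) := by
  obtain ⟨R, hR0, hR⟩ := hK.exists_pos_norm_le
  have close : ∀ s t : ℝ, ∀ x ∈ K, dist (s • x) (t • x) ≤ dist s t * R := fun s t x hx => by
    rw [dist_eq_norm, ← sub_smul, norm_smul, ← dist_eq_norm]
    exact mul_le_mul_of_nonneg_left (hR x hx) dist_nonneg
  refine squeeze_zero (fun _ => hausdorffDist_nonneg) (fun m => ?_)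
    (by simpa using (tendsto_iff_dist_tendsto_zero.1 hc).mul_const R)
  refine hausdorffDist_le_of_mem_dist (by positivity) ?_ ?_
  · rintro _ ⟨x, hx, rfl⟩
    exact ⟨a • x, smul_mem_smul_set hx, close _ _ x hx⟩
  · rintro _ ⟨x, hx, rfl⟩
    exact ⟨c m • x, smul_mem_smul_set hx, dist_comm (c m) a ▸ close _ _ x hx⟩

end HausdorffDistance

section Valuations

variable {E : Type*} [NormedAddCommGroup E] [NormedSpace ℝ E] {f g q : Set E → ℝ} {K L G : Set E}

/-- A valuation on convex bodies. -/
structure IsValuation (f : Set E → ℝ) : Prop where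
  map_empty : f ∅ = 0
  map_union : ∀ K L, IsBody K → IsBody L → Convex ℝ (K ∪ L) → f (K ∪ L) = f K + f L - f (K ∩ L)

/-- Continuity of a function of convex bodies for the Hausdorff metric, stated for sequences. -/
def IsHausdorffContinuous (f : Set E → ℝ) : Prop :=
  ∀ (K : ℕ → Set E) (L : Set E), (∀ m, IsBody (K m)) → IsBody L →
    Tendsto (fun m => hausdorffDist (K m) L) atTop (𝓝 0) →
    Tendsto (fun m => f (K m)) atTop (𝓝 (f L))

/-- The hypotheses of Hadwiger's theorem: `f` is a valuation on convex bodies which is continuous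
for the Hausdorff metric, invariant under isometries, and simple. -/
structure IsSimpleValuation (f : Set E → ℝ) : Prop extends IsValuation f where
  continuous : IsHausdorffContinuous f
  map_image : ∀ (g : E ≃ᵢ E) (K : Set E), IsBody K → f (g '' K) = f K
  eq_zero : ∀ K, IsBody K → affineSpan ℝ K ≠ ⊤ → f K = 0

/-- Additivity under cutting a compact convex set along a hyperplane: what dissection arguments use
of a simple valuation, and, unlike simplicity, inherited by `F ↦ q (coneOver v F)`. -/
structure IsCutAdditive (q : Set E → ℝ) : Prop where
  map_empty : q ∅ = 0
  map_cut : ∀ K, IsCompact K → Convex ℝ K → ∀ l : E →L[ℝ] ℝ, l ≠ 0 → ∀ c : ℝ,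
    q K = q (K ∩ {x | l x ≤ c}) + q (K ∩ {x | c ≤ l x})

/-- Minkowski additivity of `f` on convex bodies. -/
def IsMinkowskiAdditive (f : Set E → ℝ) : Prop :=
  ∀ K L, IsBody K → IsBody L → f (K + L) = f K + f L

theorem IsSimpleValuation.sub (hf : IsSimpleValuation f) (hg : IsSimpleValuation g) :
    IsSimpleValuation (f - g) where
  map_empty := by simp [hf.map_empty, hg.map_empty]
  map_union K L hK hL hKL := by
    simp only [Pi.sub_apply, hf.map_union K L hK hL hKL, hg.map_union K L hK hL hKL]
    ring
  continuous K L hK hL h := (hf.continuous K L hK hL h).sub (hg.continuous K L hK hL h)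
  map_image e K hK := by simp only [Pi.sub_apply, hf.map_image e K hK, hg.map_image e K hK]
  eq_zero K hK h := by simp [hf.eq_zero K hK h, hg.eq_zero K hK h]

theorem IsSimpleValuation.const_mul (hf : IsSimpleValuation f) (c : ℝ) :
    IsSimpleValuation (fun K => c * f K) where
  map_empty := by simp [hf.map_empty]
  map_union K L hK hL hKL := by rw [hf.map_union K L hK hL hKL]; ring
  continuous K L hK hL h := (hf.continuous K L hK hL h).const_mul c
  map_image e K hK := by rw [hf.map_image e K hK]
  eq_zero K hK h := by simp [hf.eq_zero K hK h]

theorem affineSpan_ne_top_of_apply_eq {l : E →L[ℝ] ℝ} (hl : l ≠ 0) {c : ℝ}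
    (h : ∀ x ∈ K, l x = c) : affineSpan ℝ K ≠ ⊤ := by
  intro htop
  have hconst : ∀ x : E, l x = c := by
    have hle : affineSpan ℝ K ≤ (affineSpan ℝ {c}).comap l.toLinearMap.toAffineMap :=
      affineSpan_le.2 fun x hx => by simp [h x hx]
    intro x
    simpa using hle (htop ▸ AffineSubspace.mem_top ℝ E x)
  exact hl (ContinuousLinearMap.ext fun x => by
    rw [hconst x, ← hconst 0, map_zero, zero_apply])

theorem IsSimpleValuation.eq_zero_of_apply_eq (hf : IsSimpleValuation f) (hK : IsBody K)
    {l : E →L[ℝ] ℝ} (hl : l ≠ 0) {c : ℝ} (h : ∀ x ∈ K, l x = c) : f K = 0 :=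
  hf.eq_zero K hK (affineSpan_ne_top_of_apply_eq hl h)

theorem IsSimpleValuation.map_singleton_add (hf : IsSimpleValuation f) (hK : IsBody K) (v : E) :
    f ({v} + K) = f K := by
  rw [singleton_add]
  exact hf.map_image (IsometryEquiv.addLeft v) K hK

theorem IsValuation.isCutAdditive (hq : IsValuation q)
    (hzero : ∀ K, IsBody K → ∀ l : E →L[ℝ] ℝ, l ≠ 0 → ∀ c : ℝ, (∀ x ∈ K, l x = c) → q K = 0) :
    IsCutAdditive q where
  map_empty := hq.map_empty
  map_cut K hK hc l hl c := by
    set A := K ∩ {x | l x ≤ c}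
    set B := K ∩ {x | c ≤ l x}
    have hAB : A ∪ B = K := by
      rw [← inter_union_distrib_left]
      exact inter_eq_left.2 fun x _ => le_total (l x) c
    have hA : A.Nonempty → IsBody A := fun h =>
      ⟨h, hK.inter_right (isClosed_le l.continuous continuous_const),
        hc.inter (convex_halfSpace_le l.isLinear c)⟩
    have hB : B.Nonempty → IsBody B := fun h =>
      ⟨h, hK.inter_right (isClosed_le continuous_const l.continuous),
        hc.inter (convex_halfSpace_ge l.isLinear c)⟩
    rcases A.eq_empty_or_nonempty with hA0 | hA0
    · rw [← hAB, hA0, empty_union, hq.map_empty, zero_add]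
    rcases B.eq_empty_or_nonempty with hB0 | hB0
    · rw [← hAB, hB0, union_empty, hq.map_empty, add_zero]
    have hconv : Convex ℝ (A ∪ B) := hAB ▸ hc
    have hinter : q (A ∩ B) = 0 :=
      hzero _ ((hA hA0).inter_of_convex_union (hB hB0) hconv) l hl c
        fun x hx => le_antisymm hx.1.2 hx.2.2
    rw [← hAB, hq.map_union A B (hA hA0) (hB hB0) hconv, hinter, sub_zero]

theorem IsSimpleValuation.isCutAdditive (hf : IsSimpleValuation f) : IsCutAdditive f :=
  hf.toIsValuation.isCutAdditive fun _ hK _ hl _ => hf.eq_zero_of_apply_eq hK hl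

theorem IsCutAdditive.eq_zero_of_apply_eq (hq : IsCutAdditive q) (hK : IsCompact K)
    (hc : Convex ℝ K) {l : E →L[ℝ] ℝ} (hl : l ≠ 0) {c : ℝ} (h : ∀ x ∈ K, l x = c) : q K = 0 := by
  have hle : K ∩ {x | l x ≤ c} = K := inter_eq_left.2 fun x hx => (h x hx).le
  have hge : K ∩ {x | c ≤ l x} = K := inter_eq_left.2 fun x hx => (h x hx).ge
  have hcut := hq.map_cut K hK hc l hl c
  rw [hle, hge] at hcut
  linarith

theorem IsCutAdditive.map_singleton [Nontrivial E] (hq : IsCutAdditive q) (x : E) : q {x} = 0 := by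
  obtain ⟨l, hl⟩ := exists_ne (0 : E →L[ℝ] ℝ)
  exact hq.eq_zero_of_apply_eq isCompact_singleton (convex_singleton x) hl (c := l x) (by simp)

theorem IsValuation.comp_add_left (hf : IsValuation f) (hG : IsBody G) :
    IsValuation fun K => f (G + K) where
  map_empty := by rw [add_empty, hf.map_empty]
  map_union K L hK hL hKL := by
    have hunion : Convex ℝ (G + K ∪ (G + L)) := add_union (s := G) ▸ hG.convex.add hKL
    rw [add_union, hf.map_union _ _ (hG.add hK) (hG.add hL) hunion,
      add_inter_add_of_convex_union hG.convex hK.isCompact.isClosed hL.isCompact.isClosed hKL]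

theorem IsValuation.comp_image {F : Type*} [NormedAddCommGroup F] [NormedSpace ℝ F]
    (hf : IsValuation f) {g : F →L[ℝ] E} (hg : Function.Injective g) :
    IsValuation fun K => f (g '' K) where
  map_empty := by rw [image_empty, hf.map_empty]
  map_union K L hK hL hKL := by
    rw [image_union, image_inter hg]
    refine hf.map_union _ _ (hK.image g) (hL.image g) ?_
    rw [← image_union]
    exact hKL.linear_image g.toLinearMap

theorem IsHausdorffContinuous.comp_add_left (hf : IsHausdorffContinuous f) (hG : IsBody G) :
    IsHausdorffContinuous fun K => f (G + K) := fun _ _ hK hL h =>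
  hf _ _ (fun m => hG.add (hK m)) (hG.add hL) (tendsto_hausdorffDist_add_left hK hL h)

theorem IsHausdorffContinuous.comp_image {F : Type*} [NormedAddCommGroup F] [NormedSpace ℝ F]
    (hf : IsHausdorffContinuous f) (g : F →ₗᵢ[ℝ] E) :
    IsHausdorffContinuous fun K => f (g '' K) := fun _ _ hK hL h =>
  hf _ _ (fun m => (hK m).image g.toContinuousLinearMap) (hL.image g.toContinuousLinearMap)
    (by simpa only [hausdorffDist_image g.isometry] using h)

end Valuations

section Polytopes

variable {E : Type*} [NormedAddCommGroup E] [NormedSpace ℝ E] {q : Set E → ℝ}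

/-- The polyhedron cut out by constraints normalized so that the right-hand side is `1` or `0`:
`a ≤ 1` for `a` in `A`, `1 ≤ b` for `b` in `N`, and `0 ≤ e` for `e` in `C`. Seen from the origin,
the constraints in `A` are far facets, those in `N` near facets, and those in `C` sides of a
cone. -/
def cell (A N C : List (E →L[ℝ] ℝ)) : Set E :=
  (⋂ a ∈ A, {x | a x ≤ 1}) ∩ (⋂ b ∈ N, {x | 1 ≤ b x}) ∩ ⋂ e ∈ C, {x | 0 ≤ e x}

/-- A polytope, described as a compact intersection of finitely many half-spaces. -/
def IsPolytope (P : Set E) : Prop :=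
  IsCompact P ∧ ∃ L : List ((E →L[ℝ] ℝ) × ℝ), P = {x | ∀ p ∈ L, p.1 x ≤ p.2}

theorem isClosed_cell (A N C : List (E →L[ℝ] ℝ)) : IsClosed (cell A N C) :=
  ((isClosed_biInter fun a _ => isClosed_le a.continuous continuous_const).inter
    (isClosed_biInter fun b _ => isClosed_le continuous_const b.continuous)).inter
    (isClosed_biInter fun e _ => isClosed_le continuous_const e.continuous)

theorem convex_cell (A N C : List (E →L[ℝ] ℝ)) : Convex ℝ (cell A N C) :=
  ((convex_iInter₂ fun a _ => convex_halfSpace_le a.isLinear 1).inter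
    (convex_iInter₂ fun b _ => convex_halfSpace_ge b.isLinear 1)).inter
    (convex_iInter₂ fun e _ => convex_halfSpace_ge e.isLinear 0)

theorem mem_cell {A N C : List (E →L[ℝ] ℝ)} {x : E} : x ∈ cell A N C ↔
    (∀ a ∈ A, a x ≤ 1) ∧ (∀ b ∈ N, 1 ≤ b x) ∧ ∀ e ∈ C, 0 ≤ e x := by
  simp only [cell, mem_inter_iff, mem_iInter, mem_ofPred_eq, and_assoc]

theorem cell_cons_far (a : E →L[ℝ] ℝ) (A N C : List (E →L[ℝ] ℝ)) :
    cell (a :: A) N C = cell A N C ∩ {x | a x ≤ 1} := by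
  ext x
  simp only [mem_cell, List.forall_mem_cons, mem_inter_iff, mem_ofPred_eq]
  tauto

theorem cell_cons_near (b : E →L[ℝ] ℝ) (A N C : List (E →L[ℝ] ℝ)) :
    cell A (b :: N) C = cell A N C ∩ {x | 1 ≤ b x} := by
  ext x
  simp only [mem_cell, List.forall_mem_cons, mem_inter_iff, mem_ofPred_eq]
  tauto

theorem cell_cons_side (e : E →L[ℝ] ℝ) (A N C : List (E →L[ℝ] ℝ)) :
    cell A N (e :: C) = cell A N C ∩ {x | 0 ≤ e x} := by
  ext x
  simp only [mem_cell, List.forall_mem_cons, mem_inter_iff, mem_ofPred_eq]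
  tauto

theorem cell_append_far (A A' N C : List (E →L[ℝ] ℝ)) :
    cell (A ++ A') N C = cell A [] [] ∩ cell A' N C := by
  ext x
  simp only [mem_cell, List.forall_mem_append, mem_inter_iff, List.not_mem_nil, false_imp_iff,
    implies_true, and_true]
  tauto

theorem cell_cons_far_inter_le (a a' : E →L[ℝ] ℝ) (A C : List (E →L[ℝ] ℝ)) :
    cell (a :: a' :: A) [] C ∩ {x | a x ≤ a' x} = cell (a' :: A) [] ((a' - a) :: C) := by
  ext x
  simp only [cell_cons_far, cell_cons_side, mem_inter_iff, mem_ofPred_eq, _root_.sub_apply,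
    sub_nonneg]
  constructor
  · rintro ⟨⟨⟨hx, ha'⟩, -⟩, hle⟩
    exact ⟨⟨hx, ha'⟩, hle⟩
  · rintro ⟨⟨hx, ha'⟩, hle⟩
    exact ⟨⟨⟨hx, ha'⟩, hle.trans ha'⟩, hle⟩

theorem cell_nil_nil_eq_singleton {C : List (E →L[ℝ] ℝ)} (hC : IsCompact (cell [] [] C)) :
    cell [] [] C = {0} := by
  have hcone : ∀ x ∈ cell [] [] C, ∀ t : ℝ, 0 ≤ t → t • x ∈ cell [] [] C := fun x hx t ht => by
    simp only [mem_cell, List.not_mem_nil, false_imp_iff, implies_true, true_and, map_smul,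
      smul_eq_mul] at hx ⊢
    exact fun e he => mul_nonneg ht (hx e he)
  obtain ⟨R, hR0, hR⟩ := hC.isBounded.exists_pos_norm_le
  refine eq_singleton_iff_unique_mem.2 ⟨by simp [mem_cell], fun x hx => ?_⟩
  by_contra hne
  have hpos : 0 < ‖x‖ := norm_pos_iff.2 hne
  have hle := hR _ (hcone x hx ((R + 1) / ‖x‖) (by positivity))
  rw [norm_smul, Real.norm_eq_abs, abs_of_pos (by positivity), div_mul_cancel₀ _ hpos.ne'] at hle
  linarith

/-- Cutting along `a = a'` separates two far facets: on the part where `a ≤ a'` the constraint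
`a ≤ 1` is implied by `a' ≤ 1`. -/
theorem IsCutAdditive.eq_zero_of_cell_cons [Nontrivial E] (hq : IsCutAdditive q)
    (hpyr : ∀ a ≠ 0, ∀ C, IsCompact (cell [a] [] C) → q (cell [a] [] C) = 0)
    (A : List (E →L[ℝ] ℝ)) : ∀ (a : E →L[ℝ] ℝ) (C : List (E →L[ℝ] ℝ)),
      IsCompact (cell (a :: A) [] C) → q (cell (a :: A) [] C) = 0 := by
  induction A with
  | nil =>
    intro a C hc
    rcases eq_or_ne a 0 with rfl | ha
    · have hcone : cell [0] [] C = cell [] [] C := by simp [cell_cons_far]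
      rw [hcone] at hc ⊢
      rw [cell_nil_nil_eq_singleton hc, hq.map_singleton]
    · exact hpyr a ha C hc
  | cons a' A ih =>
    intro a C hc
    have hswap : cell (a :: a' :: A) [] C = cell (a' :: a :: A) [] C := by
      simp only [cell_cons_far, inter_right_comm]
    rcases eq_or_ne a a' with rfl | hne
    · rw [cell_cons_far, inter_eq_left.2 (by rw [cell_cons_far]; exact inter_subset_right)] at hc ⊢
      exact ih a C hc
    have hle := cell_cons_far_inter_le a a' A C
    have hge := cell_cons_far_inter_le a' a A C
    rw [← hswap] at hge
    have hcut := hq.map_cut _ hc (convex_cell _ _ _) (a - a') (sub_ne_zero.2 hne) 0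
    simp only [_root_.sub_apply, sub_nonpos, sub_nonneg, hle, hge] at hcut
    rw [hcut, ih _ _ (hle ▸ hc.inter_right (isClosed_le a.continuous a'.continuous)),
      ih _ _ (hge ▸ hc.inter_right (isClosed_le a'.continuous a.continuous)), add_zero]

theorem IsCutAdditive.eq_zero_of_cell (hq : IsCutAdditive q)
    (hfar : ∀ (a : E →L[ℝ] ℝ) (A C : List (E →L[ℝ] ℝ)),
      IsCompact (cell (a :: A) [] C) → q (cell (a :: A) [] C) = 0)
    (N : List (E →L[ℝ] ℝ)) : ∀ (a : E →L[ℝ] ℝ) (A C : List (E →L[ℝ] ℝ)),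
      IsCompact (cell (a :: A) [] []) → q (cell (a :: A) N C) = 0 := by
  have hcompact : ∀ {A N C : List (E →L[ℝ] ℝ)}, IsCompact (cell A [] []) →
      IsCompact (cell A N C) := fun {A N C} h =>
    h.of_isClosed_subset (isClosed_cell A N C) fun x hx => by
      simpa [mem_cell] using (mem_cell.1 hx).1
  induction N with
  | nil => exact fun a A C hA => hfar a A C (hcompact hA)
  | cons b N ih =>
    intro a A C hA
    rcases eq_or_ne b 0 with rfl | hb
    · have hempty : cell (a :: A) (0 :: N) C = ∅ := by simp [cell_cons_near, not_le.2 one_pos]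
      rw [hempty, hq.map_empty]
    have hbA : IsCompact (cell (b :: a :: A) [] []) := by
      rw [cell_cons_far]
      exact hA.inter_right (isClosed_le b.continuous continuous_const)
    have hcut := hq.map_cut _ (hcompact (N := N) (C := C) hA) (convex_cell _ _ _) b hb 1
    rw [← cell_cons_far, ← cell_cons_near, ih a A C hA, ih b (a :: A) C hbA] at hcut
    linarith

theorem exists_cell_eq (L : List ((E →L[ℝ] ℝ) × ℝ)) :
    ∃ A N C, {x | ∀ p ∈ L, p.1 x ≤ p.2} = cell A N C := by
  induction L with
  | nil => exact ⟨[], [], [], by simp [cell]⟩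
  | cons p L ih =>
    obtain ⟨A, N, C, hL⟩ := ih
    have hcons : {x | ∀ p' ∈ p :: L, p'.1 x ≤ p'.2} = cell A N C ∩ {x | p.1 x ≤ p.2} := by
      rw [← hL]
      ext x
      simp [and_comm]
    rw [hcons]
    rcases lt_trichotomy p.2 0 with hp | hp | hp
    · refine ⟨A, (p.2⁻¹ • p.1) :: N, C, ?_⟩
      simp [cell_cons_near, inv_mul_eq_div, le_div_iff_of_neg hp]
    · exact ⟨A, N, (-p.1) :: C, by simp [cell_cons_side, hp]⟩
    · exact ⟨(p.2⁻¹ • p.1) :: A, N, C, by simp [cell_cons_far, inv_mul_le_iff₀ hp]⟩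

theorem isCompact_of_forall_mem_Icc [FiniteDimensional ℝ E] {ι : Type*} [Finite ι]
    {l : ι → E →L[ℝ] ℝ} (hl : ∀ x, (∀ j, l j x = 0) → x = 0) {T : Set E} (hT : IsClosed T)
    {a b : ι → ℝ} (h : ∀ x ∈ T, ∀ j, l j x ∈ Icc (a j) (b j)) : IsCompact T := by
  cases nonempty_fintype ι
  set Φ : E →ₗ[ℝ] ι → ℝ := LinearMap.pi fun j => (l j).toLinearMap
  have hΦ : LinearMap.ker Φ = ⊥ := (LinearMap.ker_eq_bot').2 fun x hx => hl x (congrFun hx)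
  refine ((LinearMap.isClosedEmbedding_of_injective hΦ).isCompact_preimage
    (isCompact_univ_pi fun j => isCompact_Icc (a := a j) (b := b j))).of_isClosed_subset hT ?_
  exact fun x hx j _ => h x hx j

theorem exists_isCompact_cell_superset [FiniteDimensional ℝ E] (R : ℝ) :
    ∃ A, IsCompact (cell (E := E) A [] []) ∧ closedBall 0 R ⊆ cell A [] [] := by
  set b := Module.finBasis ℝ E
  set l : Fin (Module.finrank ℝ E) → E →L[ℝ] ℝ := fun i => (b.coord i).toContinuousLinearMap
  have hl : ∀ i, ∃ r > 0, ∀ x ∈ closedBall (0 : E) R, ‖l i x‖ ≤ r := fun i => by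
    obtain ⟨r, hr, hle⟩ :=
      ((isCompact_closedBall (0 : E) R).image (l i).continuous).isBounded.exists_pos_norm_le
    exact ⟨r, hr, fun x hx => hle _ (mem_image_of_mem _ hx)⟩
  choose r hr hle using hl
  have hcell : ∀ x, x ∈ cell ((Finset.univ.toList.map fun i => (r i)⁻¹ • l i) ++
      Finset.univ.toList.map fun i => -((r i)⁻¹ • l i)) [] [] ↔ ∀ i, l i x ∈ Icc (-r i) (r i) := by
    intro x
    simp only [mem_cell, List.forall_mem_append, List.forall_mem_map, Finset.mem_toList,
      Finset.mem_univ, true_imp_iff, List.not_mem_nil, false_imp_iff, implies_true, and_true,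
      true_and, _root_.neg_apply, _root_.smul_apply, smul_eq_mul, ← mul_neg,
      inv_mul_le_iff₀ (hr _), mul_one, ← forall_and, mem_Icc, neg_le, and_comm]
  refine ⟨_, isCompact_of_forall_mem_Icc (l := l) ?_ (isClosed_cell _ _ _)
    fun x hx => (hcell x).1 hx, fun x hx => (hcell x).2 fun i => abs_le.1 (hle i x hx)⟩
  exact fun x hx => b.ext_elem fun i => by simpa [l] using hx i

theorem IsCutAdditive.eq_zero_of_isPolytope_of_pyramid [FiniteDimensional ℝ E] [Nontrivial E]
    (hq : IsCutAdditive q)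
    (hpyr : ∀ a ≠ 0, ∀ C, IsCompact (cell [a] [] C) → q (cell [a] [] C) = 0)
    {P : Set E} (hP : IsPolytope P) : q P = 0 := by
  obtain ⟨hc, L, rfl⟩ := hP
  obtain ⟨A, N, C, hL⟩ := exists_cell_eq L
  rw [hL] at hc ⊢
  obtain ⟨R, hR⟩ := hc.isBounded.subset_closedBall 0
  obtain ⟨B, hB, hRB⟩ := exists_isCompact_cell_superset (E := E) R
  -- A redundant far constraint keeps the list of far constraints nonempty.
  have hbox : cell A N C = cell (0 :: (B ++ A)) N C := by
    rw [cell_cons_far, cell_append_far, inter_eq_right.2 (hR.trans hRB)]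
    simp
  have hcompact : IsCompact (cell (0 :: (B ++ A)) [] []) := by
    refine hB.of_isClosed_subset (isClosed_cell _ _ _) ?_
    rw [cell_cons_far, cell_append_far, inter_assoc]
    exact inter_subset_left
  rw [hbox]
  exact hq.eq_zero_of_cell (fun a A => hq.eq_zero_of_cell_cons hpyr A a) N 0 (B ++ A) C hcompact

end Polytopes

section Cones

variable {E : Type*} [NormedAddCommGroup E] [InnerProductSpace ℝ E] {w : E} {q : Set E → ℝ}

/-- The point of the hyperplane `⟪w, x⟫ = 1` lying over `u ∈ wᗮ`. -/
noncomputable def liftPoint (w : E) (u : (ℝ ∙ w)ᗮ) : E := (‖w‖ ^ 2)⁻¹ • w + u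

theorem continuous_liftPoint (w : E) : Continuous (liftPoint w) :=
  continuous_const.add continuous_subtype_val

theorem inner_liftPoint (hw : w ≠ 0) (u : (ℝ ∙ w)ᗮ) : ⟪w, liftPoint w u⟫ = 1 := by
  rw [liftPoint, inner_add_right, inner_smul_right, real_inner_self_eq_norm_sq,
    Submodule.mem_orthogonal_singleton_iff_inner_right.1 u.2, add_zero,
    inv_mul_cancel₀ (pow_ne_zero 2 (norm_ne_zero_iff.2 hw))]

theorem orthogonalProjectionOnto_liftPoint (u : (ℝ ∙ w)ᗮ) :
    (ℝ ∙ w)ᗮ.orthogonalProjectionOnto (liftPoint w u) = u := by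
  rw [liftPoint, map_add, map_smul,
    Submodule.orthogonalProjectionOnto_orthogonalComplement_singleton_eq_zero, smul_zero, zero_add,
    Submodule.orthogonalProjectionOnto_mem_subspace_eq_self]

theorem smul_liftPoint {x : E} (hx : ⟪w, x⟫ ≠ 0) :
    ⟪w, x⟫ • liftPoint w (⟪w, x⟫⁻¹ • (ℝ ∙ w)ᗮ.orthogonalProjectionOnto x) = x := by
  have hproj : ((ℝ ∙ w)ᗮ.orthogonalProjectionOnto x : E) = x - (⟪w, x⟫ * (‖w‖ ^ 2)⁻¹) • w := by
    rw [Submodule.orthogonalProjectionOnto_orthogonal, ← div_eq_mul_inv]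
    exact congrArg (x - ·) (Submodule.starProjection_singleton ℝ x)
  rw [liftPoint, Submodule.coe_smul, hproj, smul_add, smul_inv_smul₀ hx, smul_smul, add_sub_cancel]

/-- The pyramid with apex `0` over the copy of `F` in the hyperplane `⟪w, x⟫ = 1`; the apex belongs
to it even when `F` is empty. -/
def coneOver (w : E) (F : Set (ℝ ∙ w)ᗮ) : Set E := insert 0 (Icc (0 : ℝ) 1 • (liftPoint w '' F))

theorem mem_coneOver (hw : w ≠ 0) {F : Set (ℝ ∙ w)ᗮ} {x : E} : x ∈ coneOver w F ↔
    x = 0 ∨ 0 < ⟪w, x⟫ ∧ ⟪w, x⟫ ≤ 1 ∧ ⟪w, x⟫⁻¹ • (ℝ ∙ w)ᗮ.orthogonalProjectionOnto x ∈ F := by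
  constructor
  · rintro (rfl | ⟨t, ⟨ht0, ht1⟩, _, ⟨u, hu, rfl⟩, rfl⟩)
    · exact .inl rfl
    rcases ht0.eq_or_lt with rfl | ht0
    · exact .inl (zero_smul ℝ _)
    refine .inr ?_
    simp only [inner_smul_right, inner_liftPoint hw, mul_one, map_smul,
      orthogonalProjectionOnto_liftPoint, inv_smul_smul₀ ht0.ne']
    exact ⟨ht0, ht1, hu⟩
  · rintro (rfl | ⟨ht0, ht1, hu⟩)
    · exact .inl rfl
    · exact .inr ⟨_, ⟨ht0.le, ht1⟩, _, mem_image_of_mem _ hu, smul_liftPoint ht0.ne'⟩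

theorem coneOver_empty (w : E) : coneOver w ∅ = {0} := by
  simp [coneOver]

theorem isCompact_coneOver {F : Set (ℝ ∙ w)ᗮ} (hF : IsCompact F) : IsCompact (coneOver w F) :=
  (isCompact_Icc.smul_set (hF.image (continuous_liftPoint w))).insert 0

theorem convex_coneOver {F : Set (ℝ ∙ w)ᗮ} (hF : Convex ℝ F) : Convex ℝ (coneOver w F) := by
  rcases F.eq_empty_or_nonempty with rfl | ⟨u, hu⟩
  · rw [coneOver_empty]
    exact convex_singleton 0
  have himage : Convex ℝ (liftPoint w '' F) := by
    have h := (hF.linear_image (ℝ ∙ w)ᗮ.subtype).translate ((‖w‖ ^ 2)⁻¹ • w)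
    rwa [← image_comp] at h
  have hjoin : coneOver w F = convexJoin ℝ {0} (liftPoint w '' F) := by
    ext x
    simp only [coneOver, mem_insert_iff, Set.mem_smul, convexJoin_singleton_left, mem_iUnion,
      segment_eq_image, smul_zero, zero_add, exists_prop]
    constructor
    · rintro (rfl | ⟨t, ht, y, hy, rfl⟩)
      · exact ⟨_, mem_image_of_mem _ hu, 0, ⟨le_rfl, zero_le_one⟩, zero_smul ℝ _⟩
      · exact ⟨y, hy, t, ht, rfl⟩
    · rintro ⟨y, hy, t, ht, rfl⟩
      exact .inr ⟨t, ht, y, hy, rfl⟩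
  rw [hjoin]
  exact (convex_singleton 0).convexJoin himage

/-- The functional on the ambient space whose zero hyperplane is spanned by the apex and the
hyperplane `l = c` of the base. -/
noncomputable def coneFunctional (w : E) (l : (ℝ ∙ w)ᗮ →L[ℝ] ℝ) (c : ℝ) : E →L[ℝ] ℝ :=
  l.comp (ℝ ∙ w)ᗮ.orthogonalProjectionOnto - c • innerSL ℝ w

theorem coneFunctional_apply (l : (ℝ ∙ w)ᗮ →L[ℝ] ℝ) (c : ℝ) (x : E) :
    coneFunctional w l c x = l ((ℝ ∙ w)ᗮ.orthogonalProjectionOnto x) - c * ⟪w, x⟫ := rfl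

theorem coneFunctional_ne_zero {l : (ℝ ∙ w)ᗮ →L[ℝ] ℝ} (hl : l ≠ 0) (c : ℝ) :
    coneFunctional w l c ≠ 0 := by
  refine fun h => hl (ContinuousLinearMap.ext fun u => ?_)
  have hu := congrArg (fun m : E →L[ℝ] ℝ => m u) h
  simpa [coneFunctional_apply, Submodule.mem_orthogonal_singleton_iff_inner_right.1 u.2] using hu

theorem coneOver_inter_le (hw : w ≠ 0) (F : Set (ℝ ∙ w)ᗮ) (l : (ℝ ∙ w)ᗮ →L[ℝ] ℝ) (c : ℝ) :
    coneOver w (F ∩ {u | l u ≤ c}) = coneOver w F ∩ {x | coneFunctional w l c x ≤ 0} := by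
  ext x
  simp only [mem_coneOver hw, mem_inter_iff, mem_ofPred_eq, map_smul, smul_eq_mul,
    coneFunctional_apply, sub_nonpos, or_and_right]
  refine or_congr (by simp +contextual) ?_
  simp only [and_assoc]
  refine and_congr_right fun ht => ?_
  rw [inv_mul_le_iff₀ ht, mul_comm ⟪w, x⟫ c]

theorem coneOver_inter_ge (hw : w ≠ 0) (F : Set (ℝ ∙ w)ᗮ) (l : (ℝ ∙ w)ᗮ →L[ℝ] ℝ) (c : ℝ) :
    coneOver w (F ∩ {u | c ≤ l u}) = coneOver w F ∩ {x | 0 ≤ coneFunctional w l c x} := by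
  have h := coneOver_inter_le hw F (-l) (-c)
  simp only [coneFunctional_apply, _root_.neg_apply, neg_le_neg_iff, neg_mul, sub_neg_eq_add,
    neg_add_nonpos_iff] at h
  simpa only [coneFunctional_apply, sub_nonneg] using h

theorem IsCutAdditive.comp_coneOver (hq : IsCutAdditive q) (hw : w ≠ 0) :
    IsCutAdditive fun F => q (coneOver w F) where
  map_empty := by
    have : Nontrivial E := nontrivial_of_ne w 0 hw
    rw [coneOver_empty, hq.map_singleton]
  map_cut F hF hc l hl c := by
    rw [coneOver_inter_le hw, coneOver_inter_ge hw]
    exact hq.map_cut _ (isCompact_coneOver hF) (convex_coneOver hc) _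
      (coneFunctional_ne_zero hl c) 0

end Cones

section Pyramids

variable {E : Type*} [NormedAddCommGroup E] [InnerProductSpace ℝ E] {w : E}

theorem mem_pyramid {C : List (E →L[ℝ] ℝ)} {x : E} :
    x ∈ cell [innerSL ℝ w] [] C ↔ ⟪w, x⟫ ≤ 1 ∧ ∀ e ∈ C, 0 ≤ e x := by
  simp [mem_cell]

theorem inner_pos_of_mem_pyramid {C : List (E →L[ℝ] ℝ)} (hc : IsCompact (cell [innerSL ℝ w] [] C))
    {x : E} (hx : x ∈ cell [innerSL ℝ w] [] C) (hx0 : x ≠ 0) : 0 < ⟪w, x⟫ := by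
  by_contra! hle
  obtain ⟨R, hR0, hR⟩ := hc.isBounded.exists_pos_norm_le
  have hpos : 0 < ‖x‖ := norm_pos_iff.2 hx0
  have hray : ((R + 1) / ‖x‖) • x ∈ cell [innerSL ℝ w] [] C := by
    rw [mem_pyramid] at hx ⊢
    simp only [inner_smul_right, map_smul, smul_eq_mul]
    have ht : 0 ≤ (R + 1) / ‖x‖ := by positivity
    exact ⟨(mul_nonpos_of_nonneg_of_nonpos ht hle).trans zero_le_one,
      fun e he => mul_nonneg ht (hx.2 e he)⟩
  have hnorm := hR _ hray
  rw [norm_smul, Real.norm_eq_abs, abs_of_pos (by positivity), div_mul_cancel₀ _ hpos.ne'] at hnorm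
  linarith

theorem exists_isPolytope_pyramid_eq_coneOver (hw : w ≠ 0) {C : List (E →L[ℝ] ℝ)}
    (hc : IsCompact (cell [innerSL ℝ w] [] C)) :
    ∃ F : Set (ℝ ∙ w)ᗮ, IsPolytope F ∧ cell [innerSL ℝ w] [] C = coneOver w F := by
  set F : Set (ℝ ∙ w)ᗮ := {u | ∀ e ∈ C, 0 ≤ e (liftPoint w u)}
  have hpre : F = liftPoint w ⁻¹' cell [innerSL ℝ w] [] C := by
    ext u
    simp [F, mem_pyramid, inner_liftPoint hw]
  refine ⟨F, ⟨?_, C.map fun e => (-(e.comp (ℝ ∙ w)ᗮ.subtypeL), e ((‖w‖ ^ 2)⁻¹ • w)), ?_⟩, ?_⟩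
  · rw [hpre]
    exact ((Homeomorph.addLeft _).isClosedEmbedding.comp
      (Submodule.isClosed_orthogonal _).isClosedEmbedding_subtypeVal).isCompact_preimage hc
  · ext u
    simp [F, liftPoint, neg_le_iff_add_nonneg]
  ext x
  rw [mem_coneOver hw]
  have hscale : 0 < ⟪w, x⟫ → ∀ e : E →L[ℝ] ℝ, 0 ≤ e (liftPoint w
      (⟪w, x⟫⁻¹ • (ℝ ∙ w)ᗮ.orthogonalProjectionOnto x)) ↔ 0 ≤ e x := fun ht e => by
    conv_rhs => rw [← smul_liftPoint ht.ne', map_smul, smul_eq_mul, mul_nonneg_iff_of_pos_left ht]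
  constructor
  · refine fun hx => or_iff_not_imp_left.2 fun hx0 => ?_
    have ht := inner_pos_of_mem_pyramid hc hx hx0
    obtain ⟨hle, hC⟩ := mem_pyramid.1 hx
    exact ⟨ht, hle, fun e he => (hscale ht e).2 (hC e he)⟩
  · rintro (rfl | ⟨ht, hle, hF⟩)
    · simp [mem_pyramid]
    · exact mem_pyramid.2 ⟨hle, fun e he => (hscale ht e).1 (hF e he)⟩

end Pyramids

section Orthoschemes

variable {E : Type*} [NormedAddCommGroup E] [InnerProductSpace ℝ E] {d : ℕ} {w : Fin d → E}

/-- Orthogonal, but not necessarily normalized, bases. Spanning is stated dually, as the absence of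
nonzero vectors orthogonal to the family, which is the form in which it gets used. -/
structure IsOrthogonalBasis {ι : Type*} (w : ι → E) : Prop where
  ne_zero : ∀ i, w i ≠ 0
  inner_eq_zero : ∀ i j, i ≠ j → ⟪w i, w j⟫ = 0
  eq_zero_of_inner : ∀ x, (∀ i, ⟪w i, x⟫ = 0) → x = 0

/-- The points whose coordinates `⟪w j, x⟫` decrease with `j` and satisfy `a j ≤ ⟪w j, x⟫ ≤ b j`. -/
def chainBox (w : Fin d → E) (a b : Fin d → ℝ) : Set E :=
  {x | Antitone (fun j => ⟪w j, x⟫) ∧ ∀ j, ⟪w j, x⟫ ∈ Icc (a j) (b j)}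

/-- For an orthogonal basis `w`, the simplex with vertices `0, v₁, v₁ + v₂, …`, where
`vⱼ = wⱼ / ‖wⱼ‖²`: its consecutive edges are pairwise orthogonal. -/
def orthoscheme (w : Fin d → E) : Set E := chainBox w 0 1

theorem mem_orthoscheme {x : E} :
    x ∈ orthoscheme w ↔ Antitone (fun j => ⟪w j, x⟫) ∧ ∀ j, 0 ≤ ⟪w j, x⟫ ∧ ⟪w j, x⟫ ≤ 1 :=
  Iff.rfl

theorem isClosed_chainBox (w : Fin d → E) (a b : Fin d → ℝ) : IsClosed (chainBox w a b) := by
  have hcont : ∀ j, Continuous fun x => ⟪w j, x⟫ := fun j => (innerSL ℝ (w j)).continuous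
  have hbox : {x | ∀ j, ⟪w j, x⟫ ∈ Icc (a j) (b j)} = ⋂ j, (⟪w j, ·⟫) ⁻¹' Icc (a j) (b j) := by
    ext x
    simp
  refine (isClosed_antitone.preimage (continuous_pi hcont)).inter ?_
  change IsClosed {x | ∀ j, ⟪w j, x⟫ ∈ Icc (a j) (b j)}
  rw [hbox]
  exact isClosed_iInter fun j => isClosed_Icc.preimage (hcont j)

theorem convex_chainBox (w : Fin d → E) (a b : Fin d → ℝ) : Convex ℝ (chainBox w a b) := by
  intro x hx y hy s t hs ht hst
  have hinner : ∀ j, ⟪w j, s • x + t • y⟫ = s * ⟪w j, x⟫ + t * ⟪w j, y⟫ := fun j => by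
    rw [inner_add_right, inner_smul_right, inner_smul_right]
  refine ⟨fun i j hij => ?_, fun j => ?_⟩
  · simp only [hinner]
    exact add_le_add (mul_le_mul_of_nonneg_left (hx.1 hij) hs)
      (mul_le_mul_of_nonneg_left (hy.1 hij) ht)
  · rw [hinner]
    exact convex_Icc (a j) (b j) (hx.2 j) (hy.2 j) hs ht hst

theorem isCompact_chainBox [FiniteDimensional ℝ E] (hw : IsOrthogonalBasis w) (a b : Fin d → ℝ) :
    IsCompact (chainBox w a b) :=
  isCompact_of_forall_mem_Icc (l := fun j => innerSL ℝ (w j)) hw.eq_zero_of_inner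
    (isClosed_chainBox w a b) fun _ hx => hx.2

theorem isBody_orthoscheme [FiniteDimensional ℝ E] (hw : IsOrthogonalBasis w) :
    IsBody (orthoscheme w) :=
  ⟨⟨0, mem_orthoscheme.2 ⟨fun _ _ _ => by simp, by simp⟩⟩, isCompact_chainBox hw 0 1,
    convex_chainBox w 0 1⟩

theorem IsOrthogonalBasis.cons {v : E} (hv : v ≠ 0) {w : Fin d → (ℝ ∙ v)ᗮ}
    (hw : IsOrthogonalBasis w) :
    IsOrthogonalBasis (Fin.cons v (fun j => (w j : E)) : Fin (d + 1) → E) where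
  ne_zero := Fin.cases hv fun j => by simpa using hw.ne_zero j
  inner_eq_zero := by
    have hvw : ∀ j, ⟪v, (w j : E)⟫ = 0 := fun j =>
      Submodule.mem_orthogonal_singleton_iff_inner_right.1 (w j).2
    refine Fin.cases (Fin.cases (fun h => (h rfl).elim) fun j _ => hvw j) fun i =>
      Fin.cases (fun _ => (real_inner_comm _ _).trans (hvw i)) fun j hij => ?_
    exact hw.inner_eq_zero i j fun h => hij (congrArg Fin.succ h)
  eq_zero_of_inner x hx := by
    have hxv : x ∈ (ℝ ∙ v)ᗮ := Submodule.mem_orthogonal_singleton_iff_inner_right.2 (hx 0)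
    exact congrArg Subtype.val (hw.eq_zero_of_inner ⟨x, hxv⟩ fun j => hx j.succ)

theorem coneOver_orthoscheme {v : E} (hv : v ≠ 0) {w : Fin d → (ℝ ∙ v)ᗮ}
    (hw : IsOrthogonalBasis w) :
    coneOver v (orthoscheme w) =
      orthoscheme (Fin.cons v (fun j => (w j : E)) : Fin (d + 1) → E) := by
  ext x
  have hcoord : ∀ j, ⟪w j, ⟪v, x⟫⁻¹ • (ℝ ∙ v)ᗮ.orthogonalProjectionOnto x⟫ =
      ⟪v, x⟫⁻¹ * ⟪(w j : E), x⟫ := fun j => by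
    rw [inner_smul_right, Submodule.inner_orthogonalProjectionOnto_eq_of_mem_left]
  rw [mem_coneOver hv, mem_orthoscheme, mem_orthoscheme]
  simp only [hcoord]
  constructor
  · rintro (rfl | ⟨ht, ht1, hanti, hw01⟩)
    · exact ⟨fun _ _ _ => by simp, by simp⟩
    have hle : ∀ j, 0 ≤ ⟪(w j : E), x⟫ ∧ ⟪(w j : E), x⟫ ≤ ⟪v, x⟫ := fun j => by
      simpa [inv_mul_le_iff₀ ht, mul_nonneg_iff_of_pos_left (inv_pos.2 ht)] using hw01 j
    refine ⟨?_, Fin.cases ⟨ht.le, ht1⟩ fun j => ⟨(hle j).1, (hle j).2.trans ht1⟩⟩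
    refine Fin.cases (Fin.cases (fun _ => le_rfl) fun j _ => (hle j).2) fun i =>
      Fin.cases (fun h => absurd h (by simp)) fun j hij => ?_
    exact le_of_mul_le_mul_left (hanti (Fin.succ_le_succ_iff.1 hij)) (inv_pos.2 ht)
  · rintro ⟨hanti, h01⟩
    have hle : ∀ j, ⟪(w j : E), x⟫ ≤ ⟪v, x⟫ := fun j => hanti (Fin.zero_le j.succ)
    rcases (h01 0).1.eq_or_lt with ht | ht
    · refine .inl ((hw.cons hv).eq_zero_of_inner x (Fin.cases ht.symm fun j => ?_))
      exact le_antisymm ((hle j).trans ht.ge) (h01 j.succ).1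
    replace ht : 0 < ⟪v, x⟫ := ht
    refine .inr ⟨ht, (h01 0).2, fun i j hij => ?_, fun j => ⟨?_, ?_⟩⟩
    · exact mul_le_mul_of_nonneg_left (hanti (Fin.succ_le_succ_iff.2 hij)) (inv_pos.2 ht).le
    · exact mul_nonneg (inv_pos.2 ht).le (h01 j.succ).1
    · rw [inv_mul_le_iff₀ ht, mul_one]
      exact hle j

theorem IsCutAdditive.eq_zero_of_isPolytope [FiniteDimensional ℝ E] {q : Set E → ℝ}
    (hq : IsCutAdditive q) (hd : Module.finrank ℝ E = d)
    (h : ∀ w : Fin d → E, IsOrthogonalBasis w → q (orthoscheme w) = 0) {P : Set E}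
    (hP : IsPolytope P) : q P = 0 := by
  induction d generalizing E with
  | zero =>
    have : Subsingleton E := Module.finrank_zero_iff.1 hd
    have huniv := h Fin.elim0 ⟨fun i => i.elim0, fun i => i.elim0, fun _ _ => Subsingleton.elim _ _⟩
    rcases P.eq_empty_or_nonempty with rfl | hne
    · exact hq.map_empty
    · rwa [Subsingleton.eq_univ_of_nonempty hne, ← eq_univ_of_forall (s := orthoscheme Fin.elim0)
        fun x => mem_orthoscheme.2 ⟨fun i => i.elim0, fun i => i.elim0⟩]
  | succ d ih =>
    have : Nontrivial E := Module.nontrivial_of_finrank_pos (R := ℝ) (hd ▸ d.succ_pos)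
    refine hq.eq_zero_of_isPolytope_of_pyramid (fun a ha C hc => ?_) hP
    obtain ⟨v, rfl⟩ : ∃ v, innerSL ℝ v = a := (InnerProductSpace.toDual ℝ E).surjective a
    have hv : v ≠ 0 := by
      rintro rfl
      exact ha (map_zero _)
    obtain ⟨F, hF, hcF⟩ := exists_isPolytope_pyramid_eq_coneOver hv hc
    have : Fact (Module.finrank ℝ E = d + 1) := ⟨hd⟩
    rw [hcF]
    refine ih (hq.comp_coneOver hv) (Submodule.finrank_orthogonal_span_singleton hv)
      (fun w hw => ?_) hF
    simp only [coneOver_orthoscheme hv hw]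
    exact h _ (hw.cons hv)

end Orthoschemes

section Approximation

variable {E : Type*} [NormedAddCommGroup E] [NormedSpace ℝ E] {K : Set E}

theorem IsPolytope.convex {P : Set E} (hP : IsPolytope P) : Convex ℝ P := by
  obtain ⟨-, L, rfl⟩ := hP
  obtain ⟨A, N, C, hL⟩ := exists_cell_eq L
  exact hL ▸ convex_cell A N C

theorem IsBody.exists_list_halfSpaces (hK : IsBody K) {C : Set E} (hC : IsCompact C)
    (hKC : Disjoint K C) : ∃ L : List ((E →L[ℝ] ℝ) × ℝ),
      (∀ p ∈ L, ∀ x ∈ K, p.1 x ≤ p.2) ∧ ∀ x ∈ C, ∃ p ∈ L, p.2 < p.1 x := by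
  refine hC.induction_on (p := fun S => ∃ L : List ((E →L[ℝ] ℝ) × ℝ),
    (∀ p ∈ L, ∀ x ∈ K, p.1 x ≤ p.2) ∧ ∀ x ∈ S, ∃ p ∈ L, p.2 < p.1 x) ⟨[], by simp⟩ ?_ ?_ ?_
  · rintro S T hST ⟨L, hL, hT⟩
    exact ⟨L, hL, fun x hx => hT x (hST hx)⟩
  · rintro S T ⟨L, hL, hS⟩ ⟨M, hM, hT⟩
    refine ⟨L ++ M, List.forall_mem_append.2 ⟨hL, hM⟩, ?_⟩
    rintro x (hx | hx)
    · obtain ⟨p, hp, hlt⟩ := hS x hx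
      exact ⟨p, List.mem_append_left M hp, hlt⟩
    · obtain ⟨p, hp, hlt⟩ := hT x hx
      exact ⟨p, List.mem_append_right L hp, hlt⟩
  · intro y hy
    obtain ⟨l, u, hlK, hly⟩ := geometric_hahn_banach_closed_point hK.convex hK.isCompact.isClosed
      (disjoint_right.1 hKC hy)
    refine ⟨_, mem_nhdsWithin_of_mem_nhds ((isOpen_lt continuous_const l.continuous).mem_nhds hly),
      [(l, u)], by simpa using fun x hx => (hlK x hx).le,
      fun x hx => ⟨_, List.mem_singleton_self _, hx⟩⟩

theorem IsBody.exists_isPolytope_superset [FiniteDimensional ℝ E] (hK : IsBody K) {ε : ℝ}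
    (hε : 0 < ε) : ∃ P, IsPolytope P ∧ K ⊆ P ∧ hausdorffDist P K ≤ ε := by
  obtain ⟨R, hR⟩ := hK.isCompact.isBounded.subset_closedBall 0
  obtain ⟨A, hA, hRA⟩ := exists_isCompact_cell_superset (E := E) R
  obtain ⟨L, hLK, hL⟩ := hK.exists_list_halfSpaces (hA.diff isOpen_thickening)
    (disjoint_sdiff_right.mono_left (self_subset_thickening hε K))
  set P : Set E := {x | ∀ p ∈ A.map (fun a => (a, (1 : ℝ))) ++ L, p.1 x ≤ p.2}
  have hP : P = cell A [] [] ∩ {x | ∀ p ∈ L, p.1 x ≤ p.2} := by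
    ext x
    simp [P, mem_cell, or_imp, forall_and]
  have hKP : K ⊆ P := hP ▸ subset_inter (hR.trans hRA) fun x hx p hp => hLK p hp x hx
  have hclosed : IsClosed P := by
    obtain ⟨A', N', C', h⟩ := exists_cell_eq (A.map (fun a => (a, (1 : ℝ))) ++ L)
    rw [show P = _ from h]
    exact isClosed_cell A' N' C'
  refine ⟨P, ⟨hA.of_isClosed_subset hclosed (hP ▸ inter_subset_left), _, rfl⟩, hKP,
    hausdorffDist_le_of_mem_dist hε.le ?_ fun x hx => ⟨x, hKP hx, by simpa using hε.le⟩⟩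
  intro x hx
  rw [hP] at hx
  have hthick : x ∈ thickening ε K := by
    by_contra hx'
    obtain ⟨p, hp, hlt⟩ := hL x ⟨hx.1, hx'⟩
    exact hlt.not_ge (hx.2 p hp)
  obtain ⟨z, hz, hxz⟩ := mem_thickening_iff.1 hthick
  exact ⟨z, hz, hxz.le⟩

theorem IsHausdorffContinuous.eq_zero_of_isPolytope [FiniteDimensional ℝ E] {q : Set E → ℝ}
    (hq : IsHausdorffContinuous q) (h : ∀ P, IsPolytope P → q P = 0) (hK : IsBody K) : q K = 0 := by
  choose P hP hKP hdist using fun m : ℕ =>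
    hK.exists_isPolytope_superset (ε := 1 / ((m : ℝ) + 1)) (by positivity)
  have htendsto := hq P K (fun m => ⟨hK.nonempty.mono (hKP m), (hP m).1, (hP m).convex⟩) hK
    (squeeze_zero (fun _ => hausdorffDist_nonneg) hdist tendsto_one_div_add_atTop_nhds_zero_nat)
  simp only [h _ (hP _)] at htendsto
  exact tendsto_nhds_unique htendsto tendsto_const_nhds

theorem eq_zero_of_orthoscheme {E : Type*} [NormedAddCommGroup E] [InnerProductSpace ℝ E]
    [FiniteDimensional ℝ E] {q : Set E → ℝ} (hq : IsCutAdditive q) (hcont : IsHausdorffContinuous q)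
    {d : ℕ} (hd : Module.finrank ℝ E = d)
    (h : ∀ w : Fin d → E, IsOrthogonalBasis w → q (orthoscheme w) = 0) {K : Set E}
    (hK : IsBody K) : q K = 0 :=
  hcont.eq_zero_of_isPolytope (fun _ => hq.eq_zero_of_isPolytope hd h) hK

end Approximation

section Dissection

variable {E : Type*} [NormedAddCommGroup E] [InnerProductSpace ℝ E] {q : Set E → ℝ} {d k : ℕ}
  {w : Fin d → E}

/-- Vanishing on all sums of two bodies contained in complementary, proper, orthogonal subspaces. -/
def VanishesOnOrthogonalSums (q : Set E → ℝ) : Prop :=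
  ∀ U : Submodule ℝ E, U ≠ ⊥ → U ≠ ⊤ → ∀ F G, IsBody F → IsBody G → F ⊆ U → G ⊆ Uᗮ → q (F + G) = 0

/-- What is left of `2 • orthoscheme w` after `k` cuts, the `j`-th along `⟪w j, x⟫ = 1`. -/
def dissectionRest (w : Fin d → E) (k : ℕ) : Set E :=
  chainBox w (fun j => if j < k then 1 else 0) 2

/-- The piece of `2 • orthoscheme w` that the `k`-th cut separates. -/
def dissectionPiece (w : Fin d → E) (k : ℕ) : Set E :=
  chainBox w (fun j => if j < k then 1 else 0) (fun j => if j < k then 2 else 1)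

theorem mem_dissectionRest {x : E} : x ∈ dissectionRest w k ↔ Antitone (fun j => ⟪w j, x⟫) ∧
    ∀ j : Fin d, (if j < k then (1 : ℝ) else 0) ≤ ⟪w j, x⟫ ∧ ⟪w j, x⟫ ≤ 2 :=
  Iff.rfl

theorem mem_dissectionPiece {x : E} : x ∈ dissectionPiece w k ↔ Antitone (fun j => ⟪w j, x⟫) ∧
    ∀ j : Fin d, (if j < k then (1 : ℝ) else 0) ≤ ⟪w j, x⟫ ∧ ⟪w j, x⟫ ≤ if j < k then 2 else 1 :=
  Iff.rfl

theorem dissectionRest_inter_le (hk : k < d) :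
    dissectionRest w k ∩ {x | ⟪w ⟨k, hk⟩, x⟫ ≤ 1} = dissectionPiece w k := by
  ext x
  rw [mem_inter_iff, mem_ofPred_eq, mem_dissectionRest, mem_dissectionPiece, and_assoc]
  refine and_congr_right fun hanti => ⟨fun ⟨hx, hle⟩ j => ⟨(hx j).1, ?_⟩, fun hx => ⟨fun j =>
    ⟨(hx j).1, (hx j).2.trans ?_⟩, by simpa using (hx ⟨k, hk⟩).2⟩⟩
  · split_ifs with hj
    · exact (hx j).2
    · exact (hanti (Fin.mk_le_of_le_val (not_lt.1 hj))).trans hle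
  · split_ifs <;> norm_num

theorem dissectionRest_inter_ge (hk : k < d) :
    dissectionRest w k ∩ {x | 1 ≤ ⟪w ⟨k, hk⟩, x⟫} = dissectionRest w (k + 1) := by
  ext x
  rw [mem_inter_iff, mem_ofPred_eq, mem_dissectionRest, mem_dissectionRest, and_assoc]
  refine and_congr_right fun hanti => ⟨fun ⟨hx, hge⟩ j => ⟨?_, (hx j).2⟩, fun hx => ⟨fun j =>
    ⟨le_trans ?_ (hx j).1, (hx j).2⟩, by simpa using (hx ⟨k, hk⟩).1⟩⟩
  · split_ifs with hj
    · exact hge.trans (hanti (Fin.le_def.2 (Nat.lt_succ_iff.1 hj)))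
    · exact (by split_ifs <;> norm_num : (0 : ℝ) ≤ if j < k then 1 else 0).trans (hx j).1
  · split_ifs <;> first | omega | norm_num

theorem dissectionRest_zero : dissectionRest w 0 = (2 : ℝ) • orthoscheme w := by
  ext x
  rw [mem_smul_set_iff_inv_smul_mem₀ two_ne_zero, mem_dissectionRest, mem_orthoscheme]
  simp only [inner_smul_right, not_lt_zero, if_false]
  refine and_congr ⟨fun h i j hij => ?_, fun h i j hij => ?_⟩ (forall_congr' fun j => ?_)
  · exact mul_le_mul_of_nonneg_left (h hij) (by norm_num)
  · exact le_of_mul_le_mul_left (h hij) (by norm_num)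
  · rw [mul_nonneg_iff_of_pos_left (by norm_num), inv_mul_le_iff₀ two_pos, mul_one]

theorem dissectionPiece_zero : dissectionPiece w 0 = orthoscheme w := by
  ext x
  simp only [mem_dissectionPiece, mem_orthoscheme, not_lt_zero, if_false]

theorem dissectionRest_last (hw : IsOrthogonalBasis w) :
    dissectionRest w d = {∑ j, (‖w j‖ ^ 2)⁻¹ • w j} + orthoscheme w := by
  have hv : ∀ i, ⟪w i, ∑ j, (‖w j‖ ^ 2)⁻¹ • w j⟫ = 1 := fun i => by
    rw [inner_sum, Finset.sum_eq_single_of_mem i (Finset.mem_univ i) fun j _ hj => by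
      rw [inner_smul_right, hw.inner_eq_zero i j hj.symm, mul_zero], inner_smul_right,
      real_inner_self_eq_norm_sq,
      inv_mul_cancel₀ (pow_ne_zero 2 (norm_ne_zero_iff.2 (hw.ne_zero i)))]
  ext x
  rw [singleton_add, image_add_left, mem_preimage, mem_dissectionRest, mem_orthoscheme]
  simp only [Fin.is_lt, if_true, inner_add_right, inner_neg_right, hv]
  refine and_congr ⟨fun h i j hij => ?_, fun h i j hij => ?_⟩ (forall_congr' fun j => ?_)
  · exact add_le_add_right (h hij) _
  · exact le_of_add_le_add_left (h hij)
  · constructor <;> rintro ⟨h1, h2⟩ <;> constructor <;> linarith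

theorem IsOrthogonalBasis.exists_submodule {ι : Type*} {w : ι → E} (hw : IsOrthogonalBasis w)
    (s : Set ι) : ∃ U : Submodule ℝ E, (∀ i ∈ s, w i ∈ U) ∧ ∀ i ∉ s, w i ∈ Uᗮ := by
  refine ⟨Submodule.span ℝ (w '' s), fun i hi => Submodule.subset_span (mem_image_of_mem w hi),
    fun i hi => (Submodule.mem_orthogonal' _ _).2 fun u hu => ?_⟩
  have hle : Submodule.span ℝ (w '' s) ≤ LinearMap.ker (innerSL ℝ (w i)).toLinearMap := by
    refine Submodule.span_le.2 ?_
    rintro _ ⟨j, hj, rfl⟩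
    exact hw.inner_eq_zero i j fun hij => hi (hij ▸ hj)
  exact hle hu

theorem starProjection_image_add_starProjection_image {U : Submodule ℝ E}
    [U.HasOrthogonalProjection] {S : Set E}
    (hS : ∀ x ∈ S, ∀ y ∈ S, U.starProjection x + Uᗮ.starProjection y ∈ S) :
    U.starProjection '' S + Uᗮ.starProjection '' S = S := by
  refine Subset.antisymm ?_ fun x hx => ⟨_, mem_image_of_mem _ hx, _, mem_image_of_mem _ hx,
    U.starProjection_add_starProjection_orthogonal x⟩
  rintro _ ⟨_, ⟨x, hx, rfl⟩, _, ⟨y, hy, rfl⟩, rfl⟩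
  exact hS x hx y hy

theorem inner_starProjection_add_of_mem {U : Submodule ℝ E} [U.HasOrthogonalProjection] {u : E}
    (hu : u ∈ U) (x y : E) : ⟪u, U.starProjection x + Uᗮ.starProjection y⟫ = ⟪u, x⟫ := by
  rw [inner_add_right, ← U.inner_starProjection_left_eq_right,
    Submodule.starProjection_eq_self_iff.2 hu,
    Submodule.inner_right_of_mem_orthogonal hu (Uᗮ.starProjection_apply_mem y), add_zero]

theorem inner_starProjection_add_of_mem_orthogonal {U : Submodule ℝ E} [U.HasOrthogonalProjection]
    {u : E} (hu : u ∈ Uᗮ) (x y : E) :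
    ⟪u, U.starProjection x + Uᗮ.starProjection y⟫ = ⟪u, y⟫ := by
  rw [inner_add_right, ← Uᗮ.inner_starProjection_left_eq_right,
    Submodule.starProjection_eq_self_iff.2 hu,
    Submodule.inner_left_of_mem_orthogonal (U.starProjection_apply_mem x) hu, zero_add]

theorem starProjection_add_mem_dissectionPiece {U : Submodule ℝ E} [U.HasOrthogonalProjection]
    (hU : ∀ j : Fin d, j < k → w j ∈ U) (hUo : ∀ j : Fin d, ¬ j < k → w j ∈ Uᗮ) {x y : E}
    (hx : x ∈ dissectionPiece w k) (hy : y ∈ dissectionPiece w k) :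
    U.starProjection x + Uᗮ.starProjection y ∈ dissectionPiece w k := by
  rw [mem_dissectionPiece] at hx hy ⊢
  refine ⟨fun i j hij => ?_, fun j => ?_⟩
  · by_cases hj : j < k
    · have hi : i < k := lt_of_le_of_lt hij hj
      simpa only [inner_starProjection_add_of_mem (hU _ hj),
        inner_starProjection_add_of_mem (hU _ hi)] using hx.1 hij
    by_cases hi : i < k
    · have hyj := (hy.2 j).2
      have hxi := (hx.2 i).1
      rw [if_neg hj] at hyj
      rw [if_pos hi] at hxi
      simpa only [inner_starProjection_add_of_mem (hU _ hi),
        inner_starProjection_add_of_mem_orthogonal (hUo _ hj)] using hyj.trans hxi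
    · simpa only [inner_starProjection_add_of_mem_orthogonal (hUo _ hi),
        inner_starProjection_add_of_mem_orthogonal (hUo _ hj)] using hy.1 hij
  · by_cases hj : j < k
    · simpa only [inner_starProjection_add_of_mem (hU _ hj)] using hx.2 j
    · simpa only [inner_starProjection_add_of_mem_orthogonal (hUo _ hj)] using hy.2 j

theorem VanishesOnOrthogonalSums.eq_zero_dissectionPiece [FiniteDimensional ℝ E]
    (hq : VanishesOnOrthogonalSums q) (hempty : q ∅ = 0) (hw : IsOrthogonalBasis w) (hk0 : 0 < k)
    (hk : k < d) : q (dissectionPiece w k) = 0 := by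
  rcases (dissectionPiece w k).eq_empty_or_nonempty with h | hne
  · rw [h, hempty]
  have hP : IsBody (dissectionPiece w k) := ⟨hne, isCompact_chainBox hw _ _, convex_chainBox w _ _⟩
  obtain ⟨U, hU, hUo⟩ := hw.exists_submodule {j | (j : ℕ) < k}
  have hbot : U ≠ ⊥ := by
    rintro rfl
    exact hw.ne_zero ⟨0, hk0.trans hk⟩ ((Submodule.mem_bot ℝ).1 (hU _ hk0))
  have htop : U ≠ ⊤ := by
    rintro rfl
    refine hw.ne_zero ⟨k, hk⟩ ((Submodule.mem_bot ℝ).1 ?_)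
    rw [← Submodule.top_orthogonal_eq_bot]
    exact hUo _ (lt_irrefl k)
  rw [← starProjection_image_add_starProjection_image (U := U) fun x hx y hy =>
    starProjection_add_mem_dissectionPiece hU hUo hx hy]
  refine hq U hbot htop _ _ (hP.image _) (hP.image _) ?_ ?_ <;>
    exact image_subset_iff.2 fun x _ => Submodule.starProjection_apply_mem _ x

theorem IsCutAdditive.two_smul_orthoscheme [FiniteDimensional ℝ E] (hq : IsCutAdditive q)
    (htrans : ∀ K, IsBody K → ∀ v, q ({v} + K) = q K) (horth : VanishesOnOrthogonalSums q)
    (hw : IsOrthogonalBasis w) (hd : 0 < d) :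
    q ((2 : ℝ) • orthoscheme w) = 2 * q (orthoscheme w) := by
  have hcut : ∀ k < d, q (dissectionRest w k) = q (dissectionPiece w k) +
      q (dissectionRest w (k + 1)) := fun k hk => by
    have hne : innerSL ℝ (w ⟨k, hk⟩) ≠ 0 := fun h =>
      hw.ne_zero ⟨k, hk⟩ (inner_self_eq_zero.1 (congrArg (fun l : E →L[ℝ] ℝ => l (w ⟨k, hk⟩)) h))
    rw [← dissectionRest_inter_le hk, ← dissectionRest_inter_ge hk]
    exact hq.map_cut _ (isCompact_chainBox hw _ _) (convex_chainBox w _ _) _ hne 1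
  have hrest : ∀ k < d, q (dissectionRest w (k + 1)) = q (dissectionRest w 1) := by
    intro k
    induction k with
    | zero => exact fun _ => rfl
    | succ k ih =>
      intro hk
      rw [← ih (by omega), hcut (k + 1) hk,
        horth.eq_zero_dissectionPiece hq.map_empty hw k.succ_pos hk, zero_add]
  have hlast : q (dissectionRest w 1) = q (orthoscheme w) := by
    rw [← hrest (d - 1) (by omega), Nat.sub_add_cancel hd, dissectionRest_last hw,
      htrans _ (isBody_orthoscheme hw)]
  rw [← dissectionRest_zero, hcut 0 hd, dissectionPiece_zero, zero_add, hlast, two_mul]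

end Dissection

section Slices

variable {E : Type*} [NormedAddCommGroup E] [InnerProductSpace ℝ E] {U : Submodule ℝ E}
  {f : Set E → ℝ}

theorem orthogonalProjectionOnto_add_coe [U.HasOrthogonalProjection] {v : E} (hv : v ∈ Uᗮ)
    (u : U) : U.orthogonalProjectionOnto (v + u) = u := by
  rw [map_add, Submodule.orthogonalProjectionOnto_eq_zero_iff.2 hv, zero_add,
    Submodule.orthogonalProjectionOnto_mem_subspace_eq_self]

theorem starProjection_orthogonal_add_coe [U.HasOrthogonalProjection] {v : E} (hv : v ∈ Uᗮ)
    (u : U) : Uᗮ.starProjection (v + u) = v := by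
  rw [map_add, Submodule.starProjection_eq_self_iff.2 hv,
    (Submodule.starProjection_apply_eq_zero_iff _).2 (Submodule.le_orthogonal_orthogonal U u.2),
    add_zero]

theorem dist_sq_eq_add_dist_sq_projection (U : Submodule ℝ E) [U.HasOrthogonalProjection]
    (x y : E) : dist x y ^ 2 =
      dist (U.orthogonalProjectionOnto x) (U.orthogonalProjectionOnto y) ^ 2
        + dist (Uᗮ.starProjection x) (Uᗮ.starProjection y) ^ 2 := by
  simp only [dist_eq_norm, ← map_sub]
  exact Submodule.norm_sq_eq_add_norm_sq_projection (x - y) U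

/-- The isometry of the ambient space acting as `g` on `U` and as the identity on `Uᗮ`. -/
noncomputable def extendIsometry [U.HasOrthogonalProjection] (g : U ≃ᵢ U) : E ≃ᵢ E where
  toFun x := Uᗮ.starProjection x + g (U.orthogonalProjectionOnto x)
  invFun x := Uᗮ.starProjection x + g.symm (U.orthogonalProjectionOnto x)
  left_inv x := by
    have hx := Uᗮ.starProjection_apply_mem x
    beta_reduce
    rw [orthogonalProjectionOnto_add_coe hx, starProjection_orthogonal_add_coe hx,
      g.symm_apply_apply, add_comm]
    exact U.starProjection_add_starProjection_orthogonal x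
  right_inv x := by
    have hx := Uᗮ.starProjection_apply_mem x
    beta_reduce
    rw [orthogonalProjectionOnto_add_coe hx, starProjection_orthogonal_add_coe hx,
      g.apply_symm_apply, add_comm]
    exact U.starProjection_add_starProjection_orthogonal x
  isometry_toFun := Isometry.of_dist_eq fun x y => by
    have hx := Uᗮ.starProjection_apply_mem x
    have hy := Uᗮ.starProjection_apply_mem y
    rw [← sq_eq_sq₀ dist_nonneg dist_nonneg, dist_sq_eq_add_dist_sq_projection U,
      orthogonalProjectionOnto_add_coe hx, orthogonalProjectionOnto_add_coe hy,
      starProjection_orthogonal_add_coe hx, starProjection_orthogonal_add_coe hy, g.dist_eq,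
      ← dist_sq_eq_add_dist_sq_projection]

theorem extendIsometry_add_coe [U.HasOrthogonalProjection] (g : U ≃ᵢ U) {v : E} (hv : v ∈ Uᗮ)
    (u : U) : extendIsometry g (v + u) = v + g u := by
  change Uᗮ.starProjection (v + u) + (g (U.orthogonalProjectionOnto (v + u)) : E) = v + g u
  rw [orthogonalProjectionOnto_add_coe hv, starProjection_orthogonal_add_coe hv]

theorem extendIsometry_image_add [U.HasOrthogonalProjection] (g : U ≃ᵢ U) {G : Set E}
    (hG : G ⊆ Uᗮ) (F : Set U) : extendIsometry g '' (G + (↑) '' F) = G + (↑) '' (g '' F) := by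
  simp only [← image2_add, image_image2, image2_image_right]
  exact image2_congr fun v hv u _ => extendIsometry_add_coe g (hG hv) u

theorem affineSpan_add_image_coe_ne_top [U.HasOrthogonalProjection] {G : Set E} (hG : G ⊆ Uᗮ)
    {F : Set U} (hF : affineSpan ℝ F ≠ ⊤) : affineSpan ℝ (G + (↑) '' F) ≠ ⊤ := by
  refine fun htop => hF ?_
  have hle : affineSpan ℝ (G + (↑) '' F) ≤
      (affineSpan ℝ F).comap U.orthogonalProjectionOnto.toLinearMap.toAffineMap := by
    refine affineSpan_le.2 ?_
    rintro _ ⟨v, hv, _, ⟨u, hu, rfl⟩, rfl⟩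
    change U.orthogonalProjectionOnto (v + u) ∈ affineSpan ℝ F
    rw [orthogonalProjectionOnto_add_coe (hG hv)]
    exact mem_affineSpan ℝ hu
  refine AffineSubspace.ext fun u => iff_of_true ?_ (AffineSubspace.mem_top ℝ U u)
  have hu := hle (htop ▸ AffineSubspace.mem_top ℝ E (u : E))
  rwa [AffineSubspace.mem_comap, LinearMap.coe_toAffineMap, ContinuousLinearMap.coe_coe,
    Submodule.orthogonalProjectionOnto_mem_subspace_eq_self] at hu

theorem IsSimpleValuation.slice [U.HasOrthogonalProjection] (hf : IsSimpleValuation f) {G : Set E}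
    (hG : IsBody G) (hGU : G ⊆ Uᗮ) : IsSimpleValuation fun F : Set U => f (G + (↑) '' F) where
  toIsValuation := (hf.toIsValuation.comp_add_left hG).comp_image (g := U.subtypeL)
    Subtype.val_injective
  continuous := (hf.continuous.comp_add_left hG).comp_image U.subtypeₗᵢ
  map_image g K hK := by
    rw [← extendIsometry_image_add g hGU]
    exact hf.map_image _ _ (hG.add (hK.image U.subtypeL))
  eq_zero K hK h :=
    hf.eq_zero _ (hG.add (hK.image U.subtypeL)) (affineSpan_add_image_coe_ne_top hGU h)

end Slices

section Cubes

variable {E : Type*} [NormedAddCommGroup E] [InnerProductSpace ℝ E] {f : Set E → ℝ} {ι κ : Type*}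
  [Fintype ι] [Fintype κ]

/-- The statement of Hadwiger's theorem for simple valuations vanishing on the unit cube, whose
proof proceeds by induction on the dimension of the space. -/
def DeterminedByCube (E : Type*) [NormedAddCommGroup E] [InnerProductSpace ℝ E]
    [FiniteDimensional ℝ E] : Prop :=
  ∀ f : Set E → ℝ, IsSimpleValuation f → f (parallelepiped (stdOrthonormalBasis ℝ E)) = 0 →
    ∀ K, IsBody K → f K = 0

theorem isBody_parallelepiped {E : Type*} [NormedAddCommGroup E] [NormedSpace ℝ E] (v : ι → E) :
    IsBody (parallelepiped v) := by
  rw [parallelepiped_eq_sum_segment]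
  refine isBody_sum fun i _ => ⟨⟨0, left_mem_segment ℝ 0 (v i)⟩, ?_, convex_segment 0 (v i)⟩
  rw [segment_eq_image_lineMap]
  exact isCompact_Icc.image AffineMap.lineMap_continuous

theorem IsSimpleValuation.map_parallelepiped_eq (hf : IsSimpleValuation f)
    (b : OrthonormalBasis ι ℝ E) (c : OrthonormalBasis κ ℝ E) :
    f (parallelepiped b) = f (parallelepiped c) := by
  classical
  obtain ⟨e⟩ : Nonempty (ι ≃ κ) := ⟨b.toBasis.indexEquiv c.toBasis⟩
  have himage : b.equiv c e '' parallelepiped b = parallelepiped c := by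
    have h := image_parallelepiped (b.equiv c e).toLinearMap b
    rw [← parallelepiped_comp_equiv c e]
    exact h.trans (congrArg parallelepiped (funext fun i => b.equiv_apply_basis c e i))
  rw [← himage]
  exact (hf.map_image (b.equiv c e).toIsometryEquiv _ (isBody_parallelepiped b)).symm

theorem parallelepiped_prod_orthogonal [FiniteDimensional ℝ E] (U : Submodule ℝ E)
    (b : OrthonormalBasis ι ℝ U) (c : OrthonormalBasis κ ℝ Uᗮ) :
    parallelepiped ((b.prod c).map U.orthogonalDecomposition.symm) =
      ((↑) '' parallelepiped b + (↑) '' parallelepiped c : Set E) := by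
  have hb : ((↑) '' parallelepiped b : Set E) = _ := image_parallelepiped U.subtype b
  have hc : ((↑) '' parallelepiped c : Set E) = _ := image_parallelepiped Uᗮ.subtype c
  rw [hb, hc]
  simp only [parallelepiped_eq_sum_segment, Fintype.sum_sum_type]
  simp

theorem IsSimpleValuation.vanishesOnOrthogonalSums [FiniteDimensional ℝ E]
    (hf : IsSimpleValuation f) (hcube : f (parallelepiped (stdOrthonormalBasis ℝ E)) = 0)
    (hsub : ∀ U : Submodule ℝ E, U ≠ ⊤ → DeterminedByCube U) : VanishesOnOrthogonalSums f := by
  have key : ∀ (U : Submodule ℝ E) (G : Set E), IsBody G → G ⊆ Uᗮ → U ≠ ⊤ →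
      f (G + (↑) '' parallelepiped (stdOrthonormalBasis ℝ U)) = 0 →
      ∀ F, IsBody F → F ⊆ U → f (G + F) = 0 := by
    intro U G hG hGU hU hzero F hF hFU
    have h := hsub U hU _ (hf.slice hG hGU) hzero _
      (hF.preimage_subtypeVal U.closed_of_finiteDimensional hFU)
    rwa [image_preimage_eq_of_subset (by simpa using hFU)] at h
  intro U hbot htop F G hF hG hFU hGU
  set Q : Set E := (↑) '' parallelepiped (stdOrthonormalBasis ℝ U)
  have hQ : IsBody Q := (isBody_parallelepiped _).image U.subtypeL
  have hQU : Q ⊆ U := Subtype.coe_image_subset _ _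
  have hprod : f (Q + (↑) '' parallelepiped (stdOrthonormalBasis ℝ Uᗮ)) = 0 := by
    rw [← parallelepiped_prod_orthogonal, hf.map_parallelepiped_eq _ (stdOrthonormalBasis ℝ E),
      hcube]
  have hQG : f (Q + G) = 0 := key Uᗮ Q hQ (hQU.trans U.le_orthogonal_orthogonal)
    (mt (Submodule.orthogonal_eq_top_iff _).1 hbot) hprod G hG hGU
  rw [add_comm]
  exact key U G hG hGU htop (add_comm Q G ▸ hQG) F hF hFU

end Cubes

section Homogeneity

variable {E : Type*} [NormedAddCommGroup E] [NormedSpace ℝ E] {f : Set E → ℝ} {K L : Set E}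

theorem hausdorffDist_smul_le (hK : IsBody K) (hL : IsBody L) (c : ℝ) :
    hausdorffDist (c • K) (c • L) ≤ ‖c‖ * hausdorffDist K L := by
  have close : ∀ {A B : Set E}, IsBody A → IsBody B → ∀ {r : ℝ}, hausdorffDist A B < r →
      ∀ x ∈ c • A, ∃ y ∈ c • B, dist x y ≤ ‖c‖ * r := by
    rintro A B hA hB r hr _ ⟨x, hx, rfl⟩
    obtain ⟨y, hy, hxy⟩ := hA.exists_dist_lt hB hx hr
    refine ⟨c • y, smul_mem_smul_set hy, ?_⟩
    exact (dist_smul_le c x y).trans (mul_le_mul_of_nonneg_left hxy.le (norm_nonneg c))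
  have hle : ∀ r > hausdorffDist K L, hausdorffDist (c • K) (c • L) ≤ ‖c‖ * r := fun r hr =>
    hausdorffDist_le_of_mem_dist
      (mul_nonneg (norm_nonneg c) (hausdorffDist_nonneg.trans hr.le)) (close hK hL hr)
      (close hL hK (hausdorffDist_comm.trans_lt hr))
  exact ge_of_tendsto (x := 𝓝[>] hausdorffDist K L)
    ((tendsto_id.mono_left nhdsWithin_le_nhds).const_mul ‖c‖) (eventually_mem_nhdsWithin.mono hle)

theorem smul_image_isometryEquiv (g : E ≃ᵢ E) (c : ℝ) (K : Set E) :
    c • g '' K = (g.toRealLinearIsometryEquiv.toIsometryEquiv.trans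
      (IsometryEquiv.addRight (c • g 0))) '' (c • K) := by
  simp only [← image_smul, image_image]
  refine image_congr fun x _ => ?_
  simp [smul_sub]

theorem affineSpan_smul_ne_top {c : ℝ} (hc : c ≠ 0) (hK : affineSpan ℝ K ≠ ⊤) :
    affineSpan ℝ (c • K) ≠ ⊤ := by
  rw [← AffineSubspace.smul_span, ← AffineSubspace.smul_top (Units.mk0 c hc).isUnit]
  exact (MulAction.injective₀ hc).ne hK

theorem IsSimpleValuation.comp_smul (hf : IsSimpleValuation f) {c : ℝ} (hc : c ≠ 0) :
    IsSimpleValuation fun K => f (c • K) where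
  map_empty := by rw [smul_set_empty, hf.map_empty]
  map_union K L hK hL hKL := by
    rw [smul_set_union, smul_set_inter₀ hc]
    exact hf.map_union _ _ (hK.smul c) (hL.smul c) (by rw [← smul_set_union]; exact hKL.smul c)
  continuous K L hK hL h := by
    refine hf.continuous _ _ (fun m => (hK m).smul c) (hL.smul c) ?_
    exact squeeze_zero (fun _ => hausdorffDist_nonneg) (fun m => hausdorffDist_smul_le (hK m) hL c)
      (by simpa using h.const_mul ‖c‖)
  map_image g K hK := by
    rw [smul_image_isometryEquiv, hf.map_image _ _ (hK.smul c)]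
  eq_zero K hK h := hf.eq_zero _ (hK.smul c) (affineSpan_smul_ne_top hc h)

theorem IsSimpleValuation.map_two_smul {E : Type*} [NormedAddCommGroup E] [InnerProductSpace ℝ E]
    [FiniteDimensional ℝ E] [Nontrivial E] {f : Set E → ℝ} {K : Set E} (hf : IsSimpleValuation f)
    (horth : VanishesOnOrthogonalSums f) (hK : IsBody K) : f ((2 : ℝ) • K) = 2 * f K := by
  have hq : IsSimpleValuation ((fun K => f ((2 : ℝ) • K)) - fun K => 2 * f K) :=
    (hf.comp_smul two_ne_zero).sub (hf.const_mul 2)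
  refine sub_eq_zero.1
    (eq_zero_of_orthoscheme hq.isCutAdditive hq.continuous rfl (fun w hw => ?_) hK)
  exact sub_eq_zero.2 (hf.isCutAdditive.two_smul_orthoscheme
    (fun K hK v => hf.map_singleton_add hK v) horth hw Module.finrank_pos)

end Homogeneity

section AdditivityDefect

open Classical in
/-- The failure of Minkowski additivity of `f` at `K` and `F`. The term `f K` is dropped when `F`
is empty, so that the defect is a valuation in `F`. -/
noncomputable def additivityDefect {E : Type*} [Add E] (f : Set E → ℝ) (K F : Set E) : ℝ :=
  f (K + F) - f F - if F.Nonempty then f K else 0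

theorem additivityDefect_of_nonempty {E : Type*} [Add E] {f : Set E → ℝ} {K F : Set E}
    (hF : F.Nonempty) : additivityDefect f K F = f (K + F) - f F - f K := by
  rw [additivityDefect, if_pos hF]

variable {E : Type*} [NormedAddCommGroup E] [NormedSpace ℝ E] {f : Set E → ℝ} {K F : Set E}

theorem IsValuation.additivityDefect (hf : IsValuation f) (hK : IsBody K) :
    IsValuation (additivityDefect f K) where
  map_empty := by simp [Hadwiger.additivityDefect, hf.map_empty]
  map_union F G hF hG hFG := by
    rw [additivityDefect_of_nonempty (hF.nonempty.inl), additivityDefect_of_nonempty hF.nonempty,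
      additivityDefect_of_nonempty hG.nonempty,
      additivityDefect_of_nonempty (hF.inter_of_convex_union hG hFG).nonempty,
      hf.map_union F G hF hG hFG, (hf.comp_add_left hK).map_union F G hF hG hFG]
    ring

theorem IsHausdorffContinuous.additivityDefect (hf : IsHausdorffContinuous f) (hK : IsBody K) :
    IsHausdorffContinuous (additivityDefect f K) := fun F G hF hG h => by
  rw [additivityDefect_of_nonempty hG.nonempty]
  simp only [fun m => additivityDefect_of_nonempty (f := f) (K := K) (hF m).nonempty]
  exact ((hf.comp_add_left hK F G hF hG h).sub (hf F G hF hG h)).sub_const (f K)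

theorem additivityDefect_singleton_add (hf : IsSimpleValuation f) (hK : IsBody K) (hF : IsBody F)
    (v : E) : additivityDefect f K ({v} + F) = additivityDefect f K F := by
  rw [additivityDefect_of_nonempty hF.nonempty,
    additivityDefect_of_nonempty ((singleton_nonempty v).add hF.nonempty), add_left_comm,
    hf.map_singleton_add (hK.add hF), hf.map_singleton_add hF]

theorem additivityDefect_eq_zero_of_two_smul [Nontrivial E] (hf : IsSimpleValuation f)
    (htwo : ∀ K, IsBody K → f ((2 : ℝ) • K) = 2 * f K) (hF : IsBody F)
    (h : ∀ K, IsBody K → additivityDefect f K ((2 : ℝ) • F) = 2 * additivityDefect f K F)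
    (hK : IsBody K) : additivityDefect f K F = 0 := by
  have hdefect := fun K => additivityDefect_of_nonempty (f := f) (K := K) hF.nonempty
  have hhalf : ∀ K, IsBody K →
      additivityDefect f ((2⁻¹ : ℝ) • K) F = additivityDefect f K F := fun K hK => by
    have hK2 : K = (2 : ℝ) • (2⁻¹ : ℝ) • K := (smul_inv_smul₀ two_ne_zero K).symm
    have hF2 := h K hK
    rw [additivityDefect_of_nonempty hF.nonempty.smul_set] at hF2
    have hsum : f (K + (2 : ℝ) • F) = 2 * f ((2⁻¹ : ℝ) • K + F) := by
      rw [← htwo _ ((hK.smul _).add hF), smul_add, ← hK2]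
    have hfK : f K = 2 * f ((2⁻¹ : ℝ) • K) := by rw [← htwo _ (hK.smul _), ← hK2]
    rw [hdefect]
    linarith [htwo F hF]
  have hpow : ∀ j : ℕ, additivityDefect f ((2⁻¹ : ℝ) ^ j • K) F = additivityDefect f K F := by
    intro j
    induction j with
    | zero => rw [pow_zero, one_smul]
    | succ j ih => rw [pow_succ', mul_smul, hhalf _ (hK.smul _), ih]
  have hlim := tendsto_hausdorffDist_smul hK.isCompact.isBounded
    (tendsto_pow_atTop_nhds_zero_of_lt_one (r := (2⁻¹ : ℝ)) (by norm_num) (by norm_num))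
  have hbody := fun j : ℕ => hK.smul ((2⁻¹ : ℝ) ^ j)
  have htendsto := ((hf.continuous.comp_add_left hF _ _ hbody (hK.smul 0) hlim).sub_const
    (f F)).sub (hf.continuous _ _ hbody (hK.smul 0) hlim)
  simp only [add_comm F, ← hdefect, hpow] at htendsto
  rw [tendsto_nhds_unique tendsto_const_nhds htendsto, hdefect, zero_smul_set hK.nonempty, zero_add,
    sub_self, ← singleton_zero, hf.isCutAdditive.map_singleton, sub_zero]

end AdditivityDefect

section MinkowskiAdditivity

variable {E : Type*} [NormedAddCommGroup E] [InnerProductSpace ℝ E] {f : Set E → ℝ} {K L : Set E}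
  {W : Submodule ℝ E}

/-- Minkowski additivity of `f` when one of the summands lies in the subspace `W`. -/
def IsMinkowskiAdditiveOn (f : Set E → ℝ) (W : Submodule ℝ E) : Prop :=
  ∀ L, IsBody L → L ⊆ W → ∀ K, IsBody K → f (K + L) = f K + f L

theorem IsMinkowskiAdditiveOn.additivityDefect_eq_zero (hW : IsMinkowskiAdditiveOn f W)
    (hf : IsSimpleValuation f) (hK : IsBody K) (hL : IsBody L) {v : E} (hLW : {v} + L ⊆ W) :
    additivityDefect f K L = 0 := by
  have hvL := (isBody_singleton v).add hL
  rw [← additivityDefect_singleton_add hf hK hL v, additivityDefect_of_nonempty hvL.nonempty,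
    hW _ hvL hLW K hK]
  ring

theorem map_subtype_lt {V : Submodule ℝ W} (hV : V ≠ ⊤) : V.map W.subtype < W := by
  simpa only [Submodule.map_subtype_top] using
    Submodule.map_strictMono_of_injective W.injective_subtype hV.lt_top

theorem isCutAdditive_additivityDefect (hf : IsSimpleValuation f)
    (hW : ∀ V < W, IsMinkowskiAdditiveOn f V) (hK : IsBody K) :
    IsCutAdditive fun F : Set W => additivityDefect f K ((↑) '' F) := by
  refine ((hf.toIsValuation.additivityDefect hK).comp_image (g := W.subtypeL)
    Subtype.val_injective).isCutAdditive fun F hF l hl c hFl => ?_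
  obtain ⟨a, ha⟩ := hF.nonempty
  have hker : l.ker ≠ ⊤ := fun h => hl (ContinuousLinearMap.ext fun x =>
    LinearMap.mem_ker.1 (h ▸ Submodule.mem_top : x ∈ l.ker))
  refine (hW _ (map_subtype_lt hker)).additivityDefect_eq_zero hf hK (hF.image W.subtypeL)
    (v := -a) ?_
  rintro _ ⟨_, rfl, _, ⟨x, hx, rfl⟩, rfl⟩
  refine ⟨-a + x, LinearMap.mem_ker.2 ?_, rfl⟩
  rw [map_add, map_neg, ContinuousLinearMap.coe_coe, hFl a ha, hFl x hx, neg_add_cancel]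

theorem vanishesOnOrthogonalSums_additivityDefect [FiniteDimensional ℝ E]
    (hW : ∀ V < W, IsMinkowskiAdditiveOn f V) (hK : IsBody K) :
    VanishesOnOrthogonalSums fun F : Set W => additivityDefect f K ((↑) '' F) := by
  intro U hbot htop F G hF hG hFU hGU
  have hF' : IsBody ((↑) '' F : Set E) := hF.image W.subtypeL
  have hG' : IsBody ((↑) '' G : Set E) := hG.image W.subtypeL
  have hsum : ((↑) '' (F + G) : Set E) = (↑) '' F + (↑) '' G := image_add W.subtype
  have haddF := hW _ (map_subtype_lt htop) _ hF' (image_mono hFU)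
  have haddG := hW _ (map_subtype_lt (mt (Submodule.orthogonal_eq_top_iff U).1 hbot)) _ hG'
    (image_mono hGU)
  beta_reduce
  rw [hsum, additivityDefect_of_nonempty (hF'.add hG').nonempty, ← add_assoc,
    haddG _ (hK.add hF'), haddF _ hK, haddG _ hF']
  ring

theorem IsMinkowskiAdditiveOn.of_lt [FiniteDimensional ℝ E] [Nontrivial E]
    (hf : IsSimpleValuation f) (htwo : ∀ K, IsBody K → f ((2 : ℝ) • K) = 2 * f K) (hbot : W ≠ ⊥)
    (hW : ∀ V < W, IsMinkowskiAdditiveOn f V) : IsMinkowskiAdditiveOn f W := by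
  intro L hL hLW K hK
  have hcut := fun K (hK : IsBody K) => isCutAdditive_additivityDefect hf hW hK
  have htrans : ∀ K, IsBody K → ∀ F : Set W, IsBody F → ∀ v : W,
      additivityDefect f K ((↑) '' ({v} + F) : Set E) = additivityDefect f K ((↑) '' F) := by
    intro K hK F hF v
    have hvF : ((↑) '' ({v} + F) : Set E) = {(v : E)} + (↑) '' F := by
      rw [← image_singleton]
      exact image_add W.subtype
    rw [hvF]
    exact additivityDefect_singleton_add hf hK (hF.image W.subtypeL) v
  have hdouble : ∀ w : Fin (Module.finrank ℝ W) → W, IsOrthogonalBasis w → ∀ K, IsBody K →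
      additivityDefect f K ((2 : ℝ) • ((↑) '' orthoscheme w)) =
        2 * additivityDefect f K ((↑) '' orthoscheme w) := by
    intro w hw K hK
    have := Submodule.nontrivial_iff_ne_bot.2 hbot
    have h := (hcut K hK).two_smul_orthoscheme (htrans K hK)
      (vanishesOnOrthogonalSums_additivityDefect hW hK) hw Module.finrank_pos
    rwa [show ((↑) '' ((2 : ℝ) • orthoscheme w) : Set E) = _ from
      image_smul_set (f := W.subtype) (2 : ℝ) (orthoscheme w)] at h
  have hzero := eq_zero_of_orthoscheme (hcut K hK)
    ((hf.continuous.additivityDefect hK).comp_image W.subtypeₗᵢ) rfl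
    (fun w hw => additivityDefect_eq_zero_of_two_smul hf htwo
      ((isBody_orthoscheme hw).image W.subtypeL) (hdouble w hw) hK)
    (hL.preimage_subtypeVal W.closed_of_finiteDimensional hLW)
  have hL' : ((↑) '' ((↑) ⁻¹' L : Set W) : Set E) = L :=
    image_preimage_eq_of_subset (by simpa using hLW)
  rw [hL', additivityDefect_of_nonempty hL.nonempty] at hzero
  linarith

theorem IsSimpleValuation.isMinkowskiAdditive [FiniteDimensional ℝ E] [Nontrivial E]
    (hf : IsSimpleValuation f) (htwo : ∀ K, IsBody K → f ((2 : ℝ) • K) = 2 * f K) :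
    IsMinkowskiAdditive f := by
  have hadd : ∀ W : Submodule ℝ E, IsMinkowskiAdditiveOn f W := by
    intro W
    induction W using WellFoundedLT.induction with
    | ind W ih =>
      rcases eq_or_ne W ⊥ with rfl | hbot
      · intro L hL hL0 K _
        have hL' : L = {0} := hL.nonempty.subset_singleton_iff.1 hL0
        rw [hL', hf.isCutAdditive.map_singleton, singleton_zero, add_zero, add_zero]
      · exact .of_lt hf htwo hbot ih
  exact fun K L hK hL => hadd ⊤ L hL (subset_univ L) K hK

end MinkowskiAdditivity

section Homothets

variable {E : Type*} [NormedAddCommGroup E] [NormedSpace ℝ E] {f : Set E → ℝ} {K : Set E}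

theorem IsMinkowskiAdditive.map_zero (hadd : IsMinkowskiAdditive f) : f 0 = 0 := by
  have h := hadd 0 0 (isBody_singleton 0) (isBody_singleton 0)
  rw [add_zero] at h
  linarith

theorem IsMinkowskiAdditive.map_natCast_smul (hadd : IsMinkowskiAdditive f) (hK : IsBody K)
    (k : ℕ) : f ((k : ℝ) • K) = k * f K := by
  induction k with
  | zero => rw [Nat.cast_zero, zero_smul_set hK.nonempty, zero_mul, hadd.map_zero]
  | succ k ih =>
    rw [Nat.cast_succ, hK.convex.add_smul k.cast_nonneg zero_le_one, one_smul,
      hadd _ _ (hK.smul k) hK, ih]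
    ring

theorem IsMinkowskiAdditive.map_natCast_div_smul (hadd : IsMinkowskiAdditive f) (hK : IsBody K)
    (k m : ℕ) : f (((k : ℝ) / m) • K) = k / m * f K := by
  rcases eq_or_ne m 0 with rfl | hm
  · simpa using hadd.map_natCast_smul hK 0
  · have hm' : (m : ℝ) ≠ 0 := Nat.cast_ne_zero.2 hm
    have h := hadd.map_natCast_smul (hK.smul (k / m)) m
    rw [smul_smul, mul_div_cancel₀ _ hm', hadd.map_natCast_smul hK] at h
    field_simp
    linarith

theorem IsMinkowskiAdditive.map_smul (hadd : IsMinkowskiAdditive f)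
    (hcont : IsHausdorffContinuous f) (hK : IsBody K) {c : ℝ} (hc : 0 ≤ c) :
    f (c • K) = c * f K := by
  have hlim := (tendsto_nat_floor_mul_div_atTop hc).comp tendsto_natCast_atTop_atTop
  have hf := hcont _ (c • K) (fun m => hK.smul _) (hK.smul c)
    (tendsto_hausdorffDist_smul hK.isCompact.isBounded hlim)
  refine tendsto_nhds_unique hf ?_
  simpa only [Function.comp_apply, hadd.map_natCast_div_smul hK] using hlim.mul_const (f K)

theorem IsMinkowskiAdditive.map_sum (hadd : IsMinkowskiAdditive f) {ι : Type*} (t : Finset ι)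
    {K : ι → Set E} (hK : ∀ i ∈ t, IsBody (K i)) : f (∑ i ∈ t, K i) = ∑ i ∈ t, f (K i) := by
  classical
  induction t using Finset.induction_on with
  | empty => rw [Finset.sum_empty, Finset.sum_empty, hadd.map_zero]
  | insert i t hi ih =>
    have ht : ∀ j ∈ t, IsBody (K j) := fun j hj => hK j (Finset.mem_insert_of_mem hj)
    rw [Finset.sum_insert hi, Finset.sum_insert hi,
      hadd _ _ (hK i (Finset.mem_insert_self i t)) (isBody_sum ht), ih ht]

end Homothets

section Separation

variable {E : Type*} [NormedAddCommGroup E] [InnerProductSpace ℝ E] [CompleteSpace E] {K : Set E}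

theorem mem_of_forall_exists_inner_le (hconv : Convex ℝ K) (hclosed : IsClosed K)
    (hne : K.Nonempty) {y : E} (h : ∀ u : E, ‖u‖ = 1 → ∃ z ∈ K, ⟪u, y⟫ ≤ ⟪u, z⟫) : y ∈ K := by
  by_contra hy
  obtain ⟨l, c, hlt, hgt⟩ := geometric_hahn_banach_closed_point hconv hclosed hy
  obtain ⟨p, rfl⟩ := (InnerProductSpace.toDual ℝ E).surjective l
  simp only [InnerProductSpace.toDual_apply_apply] at hlt hgt
  have hp : p ≠ 0 := by
    rintro rfl
    obtain ⟨z, hz⟩ := hne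
    exact lt_asymm (by simpa using hlt z hz) (by simpa using hgt)
  obtain ⟨z, hz, hyz⟩ := h (‖p‖⁻¹ • p) (norm_smul_inv_norm hp)
  rw [real_inner_smul_left, real_inner_smul_left,
    mul_le_mul_iff_right₀ (inv_pos.2 (norm_pos_iff.2 hp))] at hyz
  linarith [hlt z hz]

theorem closedBall_subset_of_forall_exists_le_inner (hconv : Convex ℝ K) (hclosed : IsClosed K)
    (hne : K.Nonempty) {r : ℝ} (h : ∀ u : E, ‖u‖ = 1 → ∃ z ∈ K, r ≤ ⟪u, z⟫) :
    closedBall 0 r ⊆ K := by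
  intro y hy
  refine mem_of_forall_exists_inner_le hconv hclosed hne fun u hu => ?_
  obtain ⟨z, hz, hrz⟩ := h u hu
  have huy : ⟪u, y⟫ ≤ ‖y‖ := by simpa only [hu, one_mul] using real_inner_le_norm u y
  exact ⟨z, hz, (huy.trans (mem_closedBall_zero_iff.1 hy)).trans hrz⟩

end Separation

section ReflectionMeans

variable {E : Type*} [NormedAddCommGroup E] [InnerProductSpace ℝ E] {f : Set E → ℝ} {L : Set E}
  {t : Finset E} {x v : E} {r R : ℝ}

theorem exists_finset_forall_exists_lt_inner [ProperSpace E] {c : ℝ} (hc : c < 1) :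
    ∃ t : Finset E, (∀ v ∈ t, ‖v‖ = 1) ∧ ∀ u : E, ‖u‖ = 1 → ∃ v ∈ t, c < ⟪u, v⟫ := by
  obtain ⟨t, ht, hcover⟩ := (isCompact_sphere (0 : E) 1).elim_nhds_subcover
    (fun v => {u | c < ⟪u, v⟫}) fun v hv => (isOpen_lt (by fun_prop) (by fun_prop)).mem_nhds (by
      rw [mem_ofPred_eq, real_inner_self_eq_norm_sq, mem_sphere_zero_iff_norm.1 hv]
      linarith)
  refine ⟨t, fun v hv => mem_sphere_zero_iff_norm.1 (ht v hv), fun u hu => ?_⟩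
  simpa only [mem_iUnion, exists_prop, mem_ofPred_eq] using hcover (mem_sphere_zero_iff_norm.2 hu)

/-- The reflection carrying `x` to the point `‖x‖ • v` in the direction of the unit vector `v`. -/
noncomputable def reflectionTo (x v : E) : E ≃ₗᵢ[ℝ] E :=
  (ℝ ∙ (x - ‖x‖ • v))ᗮ.reflection

theorem reflectionTo_apply_self (hv : ‖v‖ = 1) : reflectionTo x v x = ‖x‖ • v :=
  Submodule.reflection_sub (by rw [norm_smul, norm_norm, hv, mul_one])

/-- The Minkowski mean of the images of `L` under the reflections carrying `x` into the directions
`v ∈ t`. If `x ∈ L` and `t` is sufficiently dense in the unit sphere, it contains a larger centred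
ball than `L` does, unless `x` is close to that ball. -/
noncomputable def reflectionMean (t : Finset E) (x : E) (L : Set E) : Set E :=
  (t.card : ℝ)⁻¹ • ∑ v ∈ t, reflectionTo x v '' L

theorem IsBody.image_reflectionTo (hL : IsBody L) (x v : E) : IsBody (reflectionTo x v '' L) :=
  hL.image_isometryEquiv (reflectionTo x v).toIsometryEquiv

theorem isBody_reflectionMean (hL : IsBody L) : IsBody (reflectionMean t x L) :=
  (isBody_sum fun v _ => hL.image_reflectionTo x v).smul _

theorem smul_sum_mem_reflectionMean {g : E → E} (hg : ∀ v ∈ t, g v ∈ reflectionTo x v '' L) :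
    (t.card : ℝ)⁻¹ • ∑ v ∈ t, g v ∈ reflectionMean t x L :=
  smul_mem_smul_set (Set.finsetSum_mem_finsetSum t _ _ hg)

theorem reflectionMean_subset_closedBall (ht : t.Nonempty) (hLR : L ⊆ closedBall 0 R) :
    reflectionMean t x L ⊆ closedBall 0 R := by
  rintro _ ⟨z, hz, rfl⟩
  obtain ⟨g, hg, rfl⟩ := (Set.mem_finsetSum _ _ _).1 hz
  have hnorm : ∀ v ∈ t, ‖g v‖ ≤ R := by
    intro v hv
    obtain ⟨y, hy, hgy⟩ := hg hv
    rw [← hgy, LinearIsometryEquiv.norm_map]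
    exact mem_closedBall_zero_iff.1 (hLR hy)
  have hcard : (0 : ℝ) < t.card := Nat.cast_pos.2 ht.card_pos
  have hsum : ‖∑ v ∈ t, g v‖ ≤ t.card * R :=
    (norm_sum_le_of_le t hnorm).trans_eq (by rw [Finset.sum_const, nsmul_eq_mul])
  rw [mem_closedBall_zero_iff]
  beta_reduce
  rwa [norm_smul, norm_inv, RCLike.norm_natCast, inv_mul_le_iff₀ hcard]

theorem IsMinkowskiAdditive.map_reflectionMean (hadd : IsMinkowskiAdditive f)
    (hf : IsSimpleValuation f) (hL : IsBody L) (ht : t.Nonempty) :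
    f (reflectionMean t x L) = f L := by
  have hcard : (0 : ℝ) < t.card := Nat.cast_pos.2 ht.card_pos
  have himage : ∀ v ∈ t, f (reflectionTo x v '' L) = f L := fun v _ =>
    hf.map_image (reflectionTo x v).toIsometryEquiv L hL
  have hbody : IsBody (∑ v ∈ t, reflectionTo x v '' L) :=
    isBody_sum fun v _ => hL.image_reflectionTo x v
  rw [reflectionMean, hadd.map_smul hf.continuous hbody (inv_nonneg.2 hcard.le),
    hadd.map_sum t fun v _ => hL.image_reflectionTo x v, Finset.sum_congr rfl himage,
    Finset.sum_const, nsmul_eq_mul, inv_mul_cancel_left₀ hcard.ne']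

theorem closedBall_add_div_card_subset_reflectionMean [CompleteSpace E] {c γ : ℝ}
    (ht : ∀ v ∈ t, ‖v‖ = 1) (hcover : ∀ u : E, ‖u‖ = 1 → ∃ v ∈ t, c < ⟪u, v⟫)
    (hL : IsBody L) (hr : 0 ≤ r) (hrL : closedBall 0 r ⊆ L) (hx : x ∈ L)
    (hγ : r + γ ≤ ‖x‖ * c) : closedBall 0 (r + γ / t.card) ⊆ reflectionMean t x L := by
  classical
  have hmean := isBody_reflectionMean (t := t) (x := x) hL
  refine closedBall_subset_of_forall_exists_le_inner hmean.convex hmean.isCompact.isClosed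
    hmean.nonempty fun u hu => ?_
  obtain ⟨v₀, hv₀, hcv₀⟩ := hcover u hu
  have hcard : (0 : ℝ) < t.card := Nat.cast_pos.2 (Finset.card_pos.2 ⟨v₀, hv₀⟩)
  let g : E → E := fun v => if v = v₀ then ‖x‖ • v₀ else r • u
  have hg : ∀ v ∈ t, g v ∈ reflectionTo x v '' L := by
    intro v hv
    by_cases h : v = v₀
    · exact ⟨x, hx, by rw [reflectionTo_apply_self (ht v hv), h]; exact (if_pos rfl).symm⟩
    · refine ⟨(reflectionTo x v).symm (r • u), hrL ?_, by
        rw [LinearIsometryEquiv.apply_symm_apply]; exact (if_neg h).symm⟩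
      rw [mem_closedBall_zero_iff, LinearIsometryEquiv.norm_map, norm_smul, hu,
        Real.norm_of_nonneg hr, mul_one]
  have hinner : ∀ v ∈ t, r + (if v = v₀ then γ else 0) ≤ ⟪u, g v⟫ := by
    intro v _
    by_cases h : v = v₀
    · simp only [g, if_pos h, real_inner_smul_right]
      exact hγ.trans (mul_le_mul_of_nonneg_left hcv₀.le (norm_nonneg x))
    · simp only [g, if_neg h, real_inner_smul_right, real_inner_self_eq_norm_sq, hu]
      linarith
  refine ⟨_, smul_sum_mem_reflectionMean hg, ?_⟩
  have hsum := Finset.sum_le_sum hinner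
  rw [Finset.sum_add_distrib, Finset.sum_const, nsmul_eq_mul, Finset.sum_ite_eq' t v₀,
    if_pos hv₀, ← inner_sum] at hsum
  rw [real_inner_smul_right, le_inv_mul_iff₀ hcard, mul_add, mul_div_cancel₀ _ hcard.ne']
  exact hsum

end ReflectionMeans

section Rounding

variable {E : Type*} [NormedAddCommGroup E] [InnerProductSpace ℝ E] {f : Set E → ℝ} {L : Set E}
  {x : E} {r R a : ℝ}

theorem exists_dist_le_of_norm_le_add [ProperSpace E] {ε : ℝ} (hr : 0 ≤ r) (hε : 0 ≤ ε)
    (hx : ‖x‖ ≤ r + ε) : ∃ y ∈ closedBall (0 : E) r, dist x y ≤ ε := by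
  have hsum : x ∈ closedBall (0 : E) r + closedBall 0 ε := by
    rwa [closedBall_add_closedBall hr hε, add_zero, mem_closedBall_zero_iff]
  obtain ⟨y, hy, z, hz, rfl⟩ := mem_add.1 hsum
  exact ⟨y, hy, by rwa [dist_eq_norm, add_sub_cancel_left, ← mem_closedBall_zero_iff]⟩

theorem hausdorffDist_closedBall_le [ProperSpace E] {s ε : ℝ} (hr : 0 ≤ r) (hrs : r ≤ s)
    (hsr : s ≤ r + ε) (hrL : closedBall 0 r ⊆ L) (hLr : L ⊆ closedBall 0 (r + ε)) :
    hausdorffDist L (closedBall 0 s) ≤ ε := by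
  have hε : 0 ≤ ε := by linarith
  refine hausdorffDist_le_of_mem_dist hε (fun x hx => ?_) fun x hx => ?_
  · have hxr := mem_closedBall_zero_iff.1 (hLr hx)
    exact exists_dist_le_of_norm_le_add (hr.trans hrs) hε (by linarith)
  · obtain ⟨y, hy, hxy⟩ :=
      exists_dist_le_of_norm_le_add hr hε ((mem_closedBall_zero_iff.1 hx).trans hsr)
    exact ⟨y, hrL hy, hxy⟩

/-- The radii of the centred balls contained in some convex body inside `closedBall 0 R` on which
`f` takes the value `a`. -/
def inballRadii (f : Set E → ℝ) (R a : ℝ) : Set ℝ :=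
  {r | 0 ≤ r ∧ ∃ L, IsBody L ∧ closedBall 0 r ⊆ L ∧ L ⊆ closedBall 0 R ∧ f L = a}

theorem bddAbove_inballRadii [Nontrivial E] (f : Set E → ℝ) (R a : ℝ) :
    BddAbove (inballRadii f R a) := by
  refine ⟨R, ?_⟩
  rintro r ⟨hr, L, -, hrL, hLR, -⟩
  obtain ⟨u, hu⟩ := (NormedSpace.sphere_nonempty (x := (0 : E))).2 hr
  rw [← mem_sphere_zero_iff_norm.1 hu]
  exact mem_closedBall_zero_iff.1 (hLR (hrL (sphere_subset_closedBall hu)))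

theorem IsMinkowskiAdditive.exists_add_mem_inballRadii [ProperSpace E] [Nontrivial E]
    (hadd : IsMinkowskiAdditive f) (hf : IsSimpleValuation f) {δ : ℝ} (hR : 0 ≤ R) (hδ : 0 < δ) :
    ∃ η > 0, ∀ r L, 0 ≤ r → IsBody L → closedBall 0 r ⊆ L → L ⊆ closedBall 0 R →
      (∃ x ∈ L, r + δ ≤ ‖x‖) → r + η ∈ inballRadii f R (f L) := by
  set c : ℝ := (R + δ / 2) / (R + δ) with hc
  have hc0 : 0 < c := by positivity
  have hc1 : c < 1 := (div_lt_one (by positivity)).2 (by linarith)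
  obtain ⟨t, ht, hcover⟩ := exists_finset_forall_exists_lt_inner (E := E) hc1
  obtain ⟨u, hu⟩ := exists_norm_eq E zero_le_one
  obtain ⟨v, hv, -⟩ := hcover u hu
  have htne : t.Nonempty := ⟨v, hv⟩
  have hη : 0 < δ / 2 / t.card := div_pos (half_pos hδ) (Nat.cast_pos.2 htne.card_pos)
  refine ⟨δ / 2 / t.card, hη, ?_⟩
  rintro r L hr hL hrL hLR ⟨x, hx, hrx⟩
  have hxR : ‖x‖ ≤ R := mem_closedBall_zero_iff.1 (hLR hx)
  have hgain : r + δ / 2 ≤ ‖x‖ * c := by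
    refine le_trans ?_ (mul_le_mul_of_nonneg_right hrx hc0.le)
    rw [hc, mul_div_assoc', le_div_iff₀ (by positivity)]
    nlinarith
  exact ⟨by positivity, reflectionMean t x L, isBody_reflectionMean hL,
    closedBall_add_div_card_subset_reflectionMean ht hcover hL hr hrL hx hgain,
    reflectionMean_subset_closedBall htne hLR, hadd.map_reflectionMean hf hL htne⟩

theorem IsMinkowskiAdditive.exists_hausdorffDist_closedBall_le [ProperSpace E] [Nontrivial E]
    (hadd : IsMinkowskiAdditive f) (hf : IsSimpleValuation f) (hR : 0 ≤ R)
    (hne : (inballRadii f R a).Nonempty) {ε : ℝ} (hε : 0 < ε) :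
    ∃ L, IsBody L ∧ f L = a ∧ hausdorffDist L (closedBall 0 (sSup (inballRadii f R a))) ≤ ε := by
  have hbdd := bddAbove_inballRadii f R a
  obtain ⟨η, hη, hgrow⟩ := hadd.exists_add_mem_inballRadii hf hR hε
  obtain ⟨r, hrA, hr⟩ := exists_lt_of_lt_csSup hne
    (sub_lt_self (sSup (inballRadii f R a)) (lt_min hη hε))
  have hrs := le_csSup hbdd hrA
  obtain ⟨hr0, L, hL, hrL, hLR, rfl⟩ := hrA
  refine ⟨L, hL, rfl, hausdorffDist_closedBall_le hr0 hrs ?_ hrL fun x hx => ?_⟩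
  · linarith [min_le_right η ε]
  · by_contra hxr
    rw [mem_closedBall_zero_iff, not_le] at hxr
    have := le_csSup hbdd (hgrow r L hr0 hL hrL hLR ⟨x, hx, hxr.le⟩)
    linarith [min_le_left η ε]

theorem IsMinkowskiAdditive.exists_map_closedBall_zero_eq [ProperSpace E] [Nontrivial E]
    (hadd : IsMinkowskiAdditive f) (hf : IsSimpleValuation f) (hL : IsBody L) (hr : 0 ≤ r)
    (hrL : closedBall 0 r ⊆ L) : ∃ s ≥ r, f (closedBall 0 s) = f L := by
  obtain ⟨R, hR, hLR⟩ := hL.isCompact.isBounded.subset_closedBall_lt 0 0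
  have hrA : r ∈ inballRadii f R (f L) := ⟨hr, L, hL, hrL, hLR, rfl⟩
  set s := sSup (inballRadii f R (f L))
  have hrs : r ≤ s := le_csSup (bddAbove_inballRadii f R (f L)) hrA
  choose M hM hfM hMs using fun k : ℕ =>
    hadd.exists_hausdorffDist_closedBall_le hf hR.le ⟨r, hrA⟩ (Nat.one_div_pos_of_nat (n := k))
  have hlim : Tendsto (fun k => hausdorffDist (M k) (closedBall 0 s)) atTop (𝓝 0) :=
    squeeze_zero (fun _ => hausdorffDist_nonneg) hMs tendsto_one_div_add_atTop_nhds_zero_nat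
  have hf_lim := hf.continuous M _ hM (isBody_closedBall 0 (hr.trans hrs)) hlim
  simp only [hfM] at hf_lim
  exact ⟨s, hrs, tendsto_nhds_unique hf_lim tendsto_const_nhds⟩

theorem IsMinkowskiAdditive.exists_map_closedBall_eq [ProperSpace E] [Nontrivial E]
    (hadd : IsMinkowskiAdditive f) (hf : IsSimpleValuation f) (hL : IsBody L) (hr : 0 ≤ r)
    (hrL : closedBall x r ⊆ L) : ∃ s ≥ r, f (closedBall 0 s) = f L := by
  have hsub : closedBall 0 r ⊆ {-x} + L := by
    rw [← neg_add_cancel x, ← singleton_add_closedBall]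
    exact add_subset_add_left hrL
  obtain ⟨s, hrs, hs⟩ :=
    hadd.exists_map_closedBall_zero_eq hf ((isBody_singleton (-x)).add hL) hr hsub
  exact ⟨s, hrs, hs.trans (hf.map_singleton_add hL (-x))⟩

end Rounding

section DeterminedByCube

variable {E : Type*} [NormedAddCommGroup E] [InnerProductSpace ℝ E] [FiniteDimensional ℝ E]
  {f : Set E → ℝ}

theorem IsMinkowskiAdditive.eq_zero_of_parallelepiped [Nontrivial E] {ι : Type*} [Fintype ι]
    (hadd : IsMinkowskiAdditive f) (hf : IsSimpleValuation f) (b : Module.Basis ι ℝ E)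
    (hb : f (parallelepiped b) = 0) {K : Set E} (hK : IsBody K) : f K = 0 := by
  obtain ⟨x, hx⟩ := b.parallelepiped.interior_nonempty'
  obtain ⟨r₀, hr₀, hball⟩ := nhds_basis_closedBall.mem_iff.1 (mem_interior_iff_mem_nhds.1 hx)
  obtain ⟨r, hr₀r, hfr⟩ := hadd.exists_map_closedBall_eq hf (isBody_parallelepiped b) hr₀.le hball
  have hr : 0 < r := hr₀.trans_le hr₀r
  obtain ⟨a, ha⟩ := hK.nonempty
  obtain ⟨s, hs, hfs⟩ := hadd.exists_map_closedBall_eq hf hK le_rfl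
    (closedBall_zero.trans_subset (singleton_subset_iff.2 ha))
  have hdilate : closedBall (0 : E) s = (s / r) • closedBall 0 r := by
    rw [smul_closedBall _ _ hr.le, smul_zero, Real.norm_of_nonneg (div_nonneg hs hr.le),
      div_mul_cancel₀ _ hr.ne']
  rw [← hfs, hdilate, hadd.map_smul hf.continuous (isBody_closedBall 0 hr.le)
    (div_nonneg hs hr.le), hfr, hb, mul_zero]

theorem determinedByCube_of_submodule [Nontrivial E]
    (hsub : ∀ U : Submodule ℝ E, U ≠ ⊤ → DeterminedByCube U) : DeterminedByCube E := by
  intro f hf hcube K hK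
  have hadd : IsMinkowskiAdditive f := hf.isMinkowskiAdditive fun K hK =>
    hf.map_two_smul (hf.vanishesOnOrthogonalSums hcube hsub) hK
  rw [← OrthonormalBasis.coe_toBasis] at hcube
  exact hadd.eq_zero_of_parallelepiped hf _ hcube hK

theorem determinedByCube_of_subsingleton [Subsingleton E] : DeterminedByCube E := by
  intro f _ hcube K hK
  rw [Subsingleton.eq_univ_of_nonempty hK.nonempty, ← hcube,
    Subsingleton.eq_univ_of_nonempty (isBody_parallelepiped _).nonempty]

end DeterminedByCube

theorem determinedByCube (E : Type*) [NormedAddCommGroup E] [InnerProductSpace ℝ E]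
    [FiniteDimensional ℝ E] : DeterminedByCube E := by
  induction hn : Module.finrank ℝ E using Nat.strong_induction_on generalizing E with
  | _ n ih =>
    rcases subsingleton_or_nontrivial E with _ | _
    · exact determinedByCube_of_subsingleton
    · exact determinedByCube_of_submodule fun U hU =>
        ih _ (hn ▸ Submodule.finrank_lt hU) U rfl

section Volume

variable {E : Type*} [NormedAddCommGroup E] [InnerProductSpace ℝ E] {K L : Set E}

theorem homothety_image_subset_of_hausdorffDist_lt [CompleteSpace E] (hK : IsBody K)
    (hL : IsBody L) {x : E} {r ε : ℝ} (hε : 0 ≤ ε) (hεr : ε ≤ r) (hr : 0 < r)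
    (hball : closedBall x r ⊆ L) (hKL : hausdorffDist K L < ε) :
    AffineMap.homothety x (1 - ε / r) '' L ⊆ K := by
  rintro _ ⟨z, hz, rfl⟩
  refine mem_of_forall_exists_inner_le hK.convex hK.isCompact.isClosed hK.nonempty fun u hu => ?_
  have hxu : x + r • u ∈ L := hball (by
    rw [mem_closedBall, dist_eq_norm, add_sub_cancel_left, norm_smul, hu, mul_one,
      Real.norm_of_nonneg hr.le])
  have hy : AffineMap.homothety x (1 - ε / r) z + ε • u ∈ L := by
    convert hL.convex hz hxu (sub_nonneg.2 ((div_le_one hr).2 hεr)) (div_nonneg hε hr.le)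
      (sub_add_cancel 1 (ε / r)) using 1
    rw [AffineMap.homothety_eq_lineMap, AffineMap.lineMap_apply_module, sub_sub_cancel, smul_add,
      smul_smul, div_mul_cancel₀ _ hr.ne']
    abel
  obtain ⟨a, ha, hya⟩ := hL.exists_dist_lt hK hy (hausdorffDist_comm (s := K) ▸ hKL)
  refine ⟨a, ha, ?_⟩
  have hinner := real_inner_le_norm u (AffineMap.homothety x (1 - ε / r) z + ε • u - a)
  rw [hu, one_mul, ← dist_eq_norm, inner_sub_right, inner_add_right, real_inner_smul_right,
    real_inner_self_eq_norm_sq, hu] at hinner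
  linarith

variable [FiniteDimensional ℝ E] [MeasurableSpace E] [BorelSpace E]

theorem eventually_lt_volume_of_tendsto_hausdorffDist {K : ℕ → Set E} (hK : ∀ m, IsBody (K m))
    (hL : IsBody L) (h : Tendsto (fun m => hausdorffDist (K m) L) atTop (𝓝 0)) {a : ℝ}
    (ha : a < volume.real L) : ∀ᶠ m in atTop, a < volume.real (K m) := by
  rcases (interior L).eq_empty_or_nonempty with hint | ⟨x, hx⟩
  · have hzero : volume L = 0 := by
      simpa only [hL.isCompact.isClosed.frontier_eq, hint, sdiff_empty] using
        hL.convex.addHaar_frontier volume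
    rw [measureReal_def, hzero] at ha
    exact Eventually.of_forall fun m => ha.trans_le measureReal_nonneg
  · obtain ⟨r, hr, hball⟩ := nhds_basis_closedBall.mem_iff.1 (mem_interior_iff_mem_nhds.1 hx)
    have hshrink : ∀ᶠ ε in 𝓝[>] (0 : ℝ),
        a < |(1 - ε / r) ^ Module.finrank ℝ E| * volume.real L := by
      have hcont : Continuous fun ε : ℝ => |(1 - ε / r) ^ Module.finrank ℝ E| * volume.real L := by
        fun_prop
      refine nhdsWithin_le_nhds (hcont.continuousAt.eventually_const_lt ?_)
      simpa using ha
    obtain ⟨ε, hε, hε0, hεr⟩ := (hshrink.and (Ioc_mem_nhdsGT hr)).exists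
    filter_upwards [h.eventually_lt_const hε0] with m hm
    refine hε.trans_le ?_
    have hmono := measureReal_mono (μ := volume) (homothety_image_subset_of_hausdorffDist_lt (hK m)
      hL hε0.le hεr hr hball hm) (hK m).isCompact.measure_ne_top
    rwa [measureReal_def, Measure.addHaar_image_homothety, ENNReal.toReal_mul,
      ENNReal.toReal_ofReal (abs_nonneg _)] at hmono

theorem eventually_volume_lt_of_tendsto_hausdorffDist {K : ℕ → Set E} (hK : ∀ m, IsBody (K m))
    (hL : IsBody L) (h : Tendsto (fun m => hausdorffDist (K m) L) atTop (𝓝 0)) {a : ℝ}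
    (ha : volume.real L < a) : ∀ᶠ m in atTop, volume.real (K m) < a := by
  have hthick : ∀ᶠ ε in 𝓝[>] (0 : ℝ), volume (cthickening ε L) < ENNReal.ofReal a :=
    nhdsWithin_le_nhds ((tendsto_measure_cthickening_of_isCompact hL.isCompact).eventually_lt_const
      ((ENNReal.lt_ofReal_iff_toReal_lt hL.isCompact.measure_ne_top).2 ha))
  obtain ⟨ε, hε, hε0⟩ := (hthick.and self_mem_nhdsWithin).exists
  filter_upwards [h.eventually_lt_const hε0] with m hm
  have hsub : K m ⊆ cthickening ε L := by
    intro x hx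
    obtain ⟨y, hy, hxy⟩ := (hK m).exists_dist_lt hL hx hm
    exact mem_cthickening_of_dist_le x y ε L hy hxy.le
  exact (ENNReal.lt_ofReal_iff_toReal_lt (hK m).isCompact.measure_ne_top).1
    ((measure_mono hsub).trans_lt hε)

theorem volume_image_isometryEquiv (g : E ≃ᵢ E) (K : Set E) : volume (g '' K) = volume K := by
  have hg : ⇑g = (g 0 + ·) ∘ g.toRealLinearIsometryEquiv := by
    ext x
    simp [IsometryEquiv.toRealLinearIsometryEquiv_apply]
  rw [hg, image_comp, image_add_left, measure_preimage_add,
    LinearIsometryEquiv.image_eq_preimage_symm]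
  exact g.toRealLinearIsometryEquiv.symm.measurePreserving.measure_preimage_emb
    g.toRealLinearIsometryEquiv.symm.toHomeomorph.measurableEmbedding K

theorem isSimpleValuation_volume : IsSimpleValuation fun K : Set E => volume.real K where
  map_empty := measureReal_empty
  map_union K L hK hL _ := eq_sub_of_add_eq <|
    measureReal_union_add_inter hL.isCompact.measurableSet hK.isCompact.measure_ne_top
      hL.isCompact.measure_ne_top
  continuous _ _ hK hL h := tendsto_order.2
    ⟨fun _ => eventually_lt_volume_of_tendsto_hausdorffDist hK hL h,
      fun _ => eventually_volume_lt_of_tendsto_hausdorffDist hK hL h⟩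
  map_image g K _ := by rw [measureReal_def, volume_image_isometryEquiv, measureReal_def]
  eq_zero K hK h := (measureReal_eq_zero_iff hK.isCompact.measure_ne_top).2
    (measure_mono_null (subset_affineSpan ℝ K) (Measure.addHaar_affineSubspace volume _ h))

end Volume

end Hadwiger

open Hadwiger in
theorem stmt8_general {E : Type*} [NormedAddCommGroup E] [InnerProductSpace ℝ E]
    [FiniteDimensional ℝ E] [MeasurableSpace E] [BorelSpace E] {f : Set E → ℝ}
    (hf : IsSimpleValuation f) : ∃ c : ℝ, ∀ K, IsBody K → f K = c * volume.real K := by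
  let cube : Set E := parallelepiped (stdOrthonormalBasis ℝ E)
  have hvol : volume.real cube = 1 := by
    rw [measureReal_def, OrthonormalBasis.volume_parallelepiped, ENNReal.toReal_one]
  have hdiff := hf.sub (isSimpleValuation_volume.const_mul (f cube))
  have hcube : f cube - f cube * volume.real cube = 0 := by rw [hvol, mul_one, sub_self]
  exact ⟨f cube, fun K hK => sub_eq_zero.1 (determinedByCube E _ hdiff hcube K hK)⟩

/-- Hadwiger's theorem, simple-valuation form: a valuation on the convex
bodies of `ℝ^n` that is continuous for the Hausdorff metric, invariant under all
isometries, and simple (vanishing on bodies of dimension `< n`), is a constant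
multiple of the Lebesgue volume. -/
theorem stmt8 {n : ℕ} (f : Set (EuclideanSpace ℝ (Fin n)) → ℝ)
    (hempty : f ∅ = 0)
    (hval : ∀ K L : Set (EuclideanSpace ℝ (Fin n)), IsConvexBody K → IsConvexBody L →
      Convex ℝ (K ∪ L) → f (K ∪ L) = f K + f L - f (K ∩ L))
    (hcont : ∀ (K : ℕ → Set (EuclideanSpace ℝ (Fin n))) (L : Set (EuclideanSpace ℝ (Fin n))),
      (∀ m, IsConvexBody (K m)) → IsConvexBody L →
      Tendsto (fun m => Metric.hausdorffDist (K m) L) atTop (nhds 0) →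
      Tendsto (fun m => f (K m)) atTop (nhds (f L)))
    (hinv : ∀ (g : EuclideanSpace ℝ (Fin n) ≃ᵢ EuclideanSpace ℝ (Fin n))
      (K : Set (EuclideanSpace ℝ (Fin n))), IsConvexBody K → f (g '' K) = f K)
    (hsimple : ∀ K : Set (EuclideanSpace ℝ (Fin n)), IsConvexBody K →
      affineSpan ℝ K ≠ ⊤ → f K = 0) :
    ∃ c : ℝ, ∀ K : Set (EuclideanSpace ℝ (Fin n)), IsConvexBody K →
      f K = c * (volume K).toReal := by
  simp only [Hadwiger.isConvexBody_iff_isBody] at hval hcont hinv hsimple ⊢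
  exact stmt8_general ⟨⟨hempty, hval⟩, hcont, hinv, hsimple⟩
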